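/- arXiv:math/0109092 — 4 statements merged into one kernel-verified Lean document; each statement's English description precedes it below -/
import Mathlib

section
/- For any skew shape λ/μ, rank(λ/μ) equals the number of border strips in a minimal border strip decomposition of λ/μ; that is, rank(λ/μ) is the least integer r such that λ/μ can be partitioned into r pairwise disjoint border strips. -/
/-!
Call `j - i` the content of the square `(i, j)`. The squares of `λ/μ` of content `c` occupy an
interval of rows `a c ≤ i < b c`, where `a` and `b` read off the boundary paths of `μ` and `λ`:
each of them either stays constant or drops by one from `c` to `c + 1` (`exists_threshold`,
`DiagData`). Let `n c = b c - a c`, and let `E` be the set of those `c` for which `a` drops and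
`b` does not, that is, for which `n (c + 1) = n c + 1`. All three numbers below equal `#E`.

*The rank* (`rank_eq`). With `α c = a c - a (c + 1) ∈ {0, 1}`, the first square of diagonal `c`
is an outside corner iff `α (c - 1) = 1` and `α c = 0`, and an inside corner iff `α (c - 1) = 0`
and `α c = 1`. Hence `d⁺ - d⁻ = ∑ n c * (α (c - 1) - α c) = ∑ α c * (n (c + 1) - n c) = #E`.

*Lower bound* (`DiagData.lower_bound`). A border strip meets each diagonal at most once, and the
contents of its squares form an interval. If `n (c + 1) > n c`, some strip of a given
decomposition meets diagonal `c + 1` but not diagonal `c`, so its least content is `c + 1`;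
strips obtained from different `c` are therefore different.

*Upper bound* (`DiagData.exists_decomposition`). From a square of content `c` step up if both `a`
and `b` drop at `c`, and to the right otherwise, as long as this stays inside the shape. This
joins the squares of diagonals `c` and `c + 1` as completely as possible, and a square has no
predecessor exactly when it is the first square of a diagonal `c + 1` with `c ∈ E`. The
resulting paths of right and up steps are border strips (`isBorderStrip_path`).
-/


open Set Polynomial

namespace SkewBorder

noncomputable section

/-- A partition, as a weakly decreasing sequence of naturals that is eventually zero
(equivalently, has finite sum). -/
def IsPartitionFn (f : ℕ → ℕ) : Prop :=
  (∀ i j, i ≤ j → f j ≤ f i) ∧ ∃ N, ∀ i, N ≤ i → f i = 0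

/-- A skew shape `λ/μ`, given by a pair of partitions `μ ⊆ λ`. -/
structure SkewShape where
  lam : ℕ → ℕ
  mu : ℕ → ℕ
  lam_part : IsPartitionFn lam
  mu_part : IsPartitionFn mu
  mu_le : ∀ i, mu i ≤ lam i

/-- The Young diagram (set of squares) of a skew diagram determined by outer
function `f` and inner function `g`; square `(i,j)` (row `i`, column `j`,
`0`-based, rows increasing downwards) belongs to it iff `0 ≤ i` and
`g i ≤ j < f i`. -/
def skewCells (f g : ℕ → ℕ) : Set (ℤ × ℤ) :=
  {p | 0 ≤ p.1 ∧ (g p.1.toNat : ℤ) ≤ p.2 ∧ p.2 < (f p.1.toNat : ℤ)}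

/-- The squares of the skew shape `λ/μ`. -/
def SkewShape.cells (sh : SkewShape) : Set (ℤ × ℤ) := skewCells sh.lam sh.mu

/-- An outside top corner of `λ/μ`. -/
def OutsideCorner (sh : SkewShape) (p : ℤ × ℤ) : Prop :=
  p ∈ sh.cells ∧ (p.1 - 1, p.2) ∉ sh.cells ∧ (p.1, p.2 - 1) ∉ sh.cells

/-- An inside top corner of `λ/μ`. -/
def InsideCorner (sh : SkewShape) (p : ℤ × ℤ) : Prop :=
  p ∈ sh.cells ∧ (p.1 - 1, p.2) ∈ sh.cells ∧ (p.1, p.2 - 1) ∈ sh.cells ∧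
    (p.1 - 1, p.2 - 1) ∉ sh.cells

/-- `d⁺(λ/μ)`: the total number of outside diagonal squares. -/
def SkewShape.dplus (sh : SkewShape) : ℕ :=
  {p : ℤ × ℤ | p ∈ sh.cells ∧ ∃ q : ℤ × ℤ, OutsideCorner sh q ∧
    ∃ n : ℕ, p = (q.1 + n, q.2 + n)}.ncard

/-- `d⁻(λ/μ)`: the total number of inside diagonal squares. -/
def SkewShape.dminus (sh : SkewShape) : ℕ :=
  {p : ℤ × ℤ | p ∈ sh.cells ∧ ∃ q : ℤ × ℤ, InsideCorner sh q ∧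
    ∃ n : ℕ, p = (q.1 + n, q.2 + n)}.ncard

/-- The (Durfee/Frobenius) rank of a skew shape: `rank(λ/μ) = d⁺(λ/μ) − d⁻(λ/μ)`. -/
def SkewShape.rank (sh : SkewShape) : ℕ := sh.dplus - sh.dminus

/-- Two squares are adjacent if they share an edge. -/
def CellAdj (p q : ℤ × ℤ) : Prop :=
  (p.1 = q.1 ∧ (p.2 = q.2 + 1 ∨ q.2 = p.2 + 1)) ∨
  (p.2 = q.2 ∧ (p.1 = q.1 + 1 ∨ q.1 = p.1 + 1))

/-- A set of squares is connected (equivalently, the interior of the corresponding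
union of closed unit squares is a connected open set): it is nonempty and any two
of its squares are joined by a path of edge-adjacent squares inside the set. -/
def IsConnectedCellSet (B : Set (ℤ × ℤ)) : Prop :=
  B.Nonempty ∧ ∀ p ∈ B, ∀ q ∈ B,
    Relation.ReflTransGen (fun x y => y ∈ B ∧ CellAdj x y) p q

/-- A set of squares is a skew diagram if it is the diagram of some `λ/μ`. -/
def IsSkewDiagram (B : Set (ℤ × ℤ)) : Prop :=
  ∃ f g : ℕ → ℕ, IsPartitionFn f ∧ IsPartitionFn g ∧ (∀ i, g i ≤ f i) ∧ B = skewCells f g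

/-- A border strip: a nonempty connected skew shape with no `2 × 2` square. -/
def IsBorderStrip (B : Set (ℤ × ℤ)) : Prop :=
  IsSkewDiagram B ∧ IsConnectedCellSet B ∧
    ∀ p : ℤ × ℤ, ¬ (p ∈ B ∧ (p.1 + 1, p.2) ∈ B ∧ (p.1, p.2 + 1) ∈ B ∧ (p.1 + 1, p.2 + 1) ∈ B)

/-- A border strip decomposition of `λ/μ`: a partition of its squares into
pairwise disjoint border strips. -/
def IsBSD (sh : SkewShape) (D : Set (Set (ℤ × ℤ))) : Prop :=
  (∀ B ∈ D, IsBorderStrip B) ∧ D.PairwiseDisjoint id ∧ ⋃₀ D = sh.cells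

/-- A minimal border strip decomposition: one with the fewest possible strips. -/
def IsMinBSD (sh : SkewShape) (D : Set (Set (ℤ × ℤ))) : Prop :=
  IsBSD sh D ∧ ∀ D', IsBSD sh D' → D.ncard ≤ D'.ncard

/-- `mbsd(λ/μ)`: the number of minimal border strip decompositions. -/
noncomputable def mbsd (sh : SkewShape) : ℕ := {D : Set (Set (ℤ × ℤ)) | IsMinBSD sh D}.ncard

/-- The step at diagonal position `k` of the boundary path of the partition `f`
(read from lower left to upper right) is vertical, i.e. the corresponding letter of
the Comét code of `f` is `0`.  (Vertical steps occur exactly at the positions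
`f i − i − 1`, `i ≥ 0`.)  For a skew shape `λ/μ`, taking `f = λ` gives the lower
envelope (the top row `c` of `code(λ/μ)`) and `f = μ` gives the upper envelope
(the bottom row `d`). -/
def vertStep (f : ℕ → ℕ) (k : ℤ) : Prop := ∃ i : ℕ, k = (f i : ℤ) - i - 1

/-- The zigzag `{(i,j), (i−1,j), (i−1,j−1), (i−2,j−1), (i−2,j−2), …}` starting at a
square `p = (i,j)`, used to define the snake of a horizontal lower-envelope edge. -/
def zigzagH (p : ℤ × ℤ) : Set (ℤ × ℤ) :=
  {q | ∃ t : ℕ, q = (p.1 - (((t + 1) / 2 : ℕ) : ℤ), p.2 - ((t / 2 : ℕ) : ℤ))}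

/-- The zigzag `{(i,j), (i,j−1), (i−1,j−1), (i−1,j−2), (i−2,j−2), …}` starting at a
square `p = (i,j)`, used to define the snake of a vertical lower-envelope edge. -/
def zigzagV (p : ℤ × ℤ) : Set (ℤ × ℤ) :=
  {q | ∃ t : ℕ, q = (p.1 - ((t / 2 : ℕ) : ℤ), p.2 - (((t + 1) / 2 : ℕ) : ℤ))}

/-- The diagram of the outer partition `λ` alone. -/
def lamCells (sh : SkewShape) : Set (ℤ × ℤ) := skewCells sh.lam (fun _ => 0)

/-- The snake `S_e` of the edge `e` of the lower envelope of `λ/μ` at diagonal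
position `k`.  If `e` is vertical it is the right-hand edge of the square
`(i, λ_i − 1)` where `k = λ_i − i − 1`, and `S_e = (λ/μ) ∩ zigzagV` from that square;
if `e` is horizontal it is the lower edge of the lowest square of `λ` on the
diagonal `j − i = k + 1`, and `S_e = (λ/μ) ∩ zigzagH` from that square.
(If no such square of `λ/μ` exists, i.e. `e` also lies on the upper envelope, the
intersection is empty, in accordance with `S_e = ∅`.) -/
def snake (sh : SkewShape) (k : ℤ) : Set (ℤ × ℤ) :=
  {q | q ∈ sh.cells ∧
    ((vertStep sh.lam k ∧ ∃ i : ℕ, k = (sh.lam i : ℤ) - i - 1 ∧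
        q ∈ zigzagV ((i : ℤ), (sh.lam i : ℤ) - 1)) ∨
     (¬ vertStep sh.lam k ∧ ∃ p : ℤ × ℤ, p ∈ lamCells sh ∧ p.2 - p.1 = k + 1 ∧
        (p.1 + 1, p.2 + 1) ∉ lamCells sh ∧ q ∈ zigzagH p))}

/-- The snake at position `k` is a left snake: it comes from a vertical edge and has
even length (= odd number of squares); its symbol in the snake sequence is `L_m`
with `m = (snake sh k).ncard / 2`. -/
def IsLeftSnakePos (sh : SkewShape) (k : ℤ) : Prop :=
  vertStep sh.lam k ∧ Odd (snake sh k).ncard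

/-- The snake at position `k` is a right snake: it comes from a horizontal edge and
has even length (= odd number of squares); its symbol in the snake sequence is `R_m`
with `m = (snake sh k).ncard / 2`. -/
def IsRightSnakePos (sh : SkewShape) (k : ℤ) : Prop :=
  ¬ vertStep sh.lam k ∧ Odd (snake sh k).ncard

/-- An interval set of `λ/μ`: a set of `rank(λ/μ)` pairs `(u,v)` with `u < v`,
all coordinates distinct, `q_u` a left-snake symbol `L_s` and `q_v` a right-snake
symbol `R_t` in the snake sequence. -/
def IsIntervalSet (sh : SkewShape) (I : Finset (ℤ × ℤ)) : Prop :=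
  I.card = sh.rank ∧
  (∀ p ∈ I, p.1 < p.2 ∧ IsLeftSnakePos sh p.1 ∧ IsRightSnakePos sh p.2) ∧
  (∀ p ∈ I, ∀ q ∈ I, p ≠ q → p.1 ≠ q.1 ∧ p.1 ≠ q.2 ∧ p.2 ≠ q.1 ∧ p.2 ≠ q.2)

/-- `is(λ/μ)`: the number of interval sets of `λ/μ`. -/
noncomputable def isNum (sh : SkewShape) : ℕ :=
  {I : Finset (ℤ × ℤ) | IsIntervalSet sh I}.ncard

/-- `L` is a link of the snake `S`: a pair of consecutive (edge-adjacent) squares of `S`. -/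
def IsLinkOf (L S : Set (ℤ × ℤ)) : Prop :=
  ∃ p q : ℤ × ℤ, p ∈ S ∧ q ∈ S ∧ CellAdj p q ∧ L = {p, q}

/-- `L` is a link of some snake of `λ/μ`. -/
def IsLink (sh : SkewShape) (L : Set (ℤ × ℤ)) : Prop := ∃ k : ℤ, IsLinkOf L (snake sh k)

/-- Two links are consecutive if they are distinct and have a square in common. -/
def ConsecutiveLinks (L1 L2 : Set (ℤ × ℤ)) : Prop := L1 ≠ L2 ∧ (L1 ∩ L2).Nonempty

/-- A border strip decomposition uses a link if some of its strips contains both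
squares of the link. -/
def DecompUses (D : Set (Set (ℤ × ℤ))) (L : Set (ℤ × ℤ)) : Prop := ∃ B ∈ D, L ⊆ B

/-- A border strip tableau of shape `λ/μ` with `m` strips: a chain of partitions
`μ = c 0 ⊆ c 1 ⊆ ⋯ ⊆ c m = λ` each of whose successive quotients is a border strip. -/
def IsBSTableau (sh : SkewShape) (m : ℕ) (c : ℕ → ℕ → ℕ) : Prop :=
  c 0 = sh.mu ∧ c m = sh.lam ∧ (∀ s, s ≤ m → IsPartitionFn (c s)) ∧
  ∀ s, s < m → (∀ i, c s i ≤ c (s + 1) i) ∧ IsBorderStrip (skewCells (c (s + 1)) (c s))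

/-- The `s`-th border strip `c (s+1) / c s` of a tableau. -/
def tabStrip (c : ℕ → ℕ → ℕ) (s : ℕ) : Set (ℤ × ℤ) := skewCells (c (s + 1)) (c s)

/-- The border strip decomposition corresponding to a border strip tableau. -/
def tabDecomp (m : ℕ) (c : ℕ → ℕ → ℕ) : Set (Set (ℤ × ℤ)) :=
  {B | ∃ s, s < m ∧ B = tabStrip c s}

/-- A border strip tableau, normalized so that the chain is constant from `m` on
(so that each abstract tableau is represented by exactly one pair `(m, c)`). -/
def IsNormalizedTab (sh : SkewShape) (m : ℕ) (c : ℕ → ℕ → ℕ) : Prop :=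
  IsBSTableau sh m c ∧ ∀ s, m ≤ s → c s = sh.lam

/-- `mbst(λ/μ)`: the number of minimal border strip tableaux of shape `λ/μ`
(those whose corresponding decomposition is minimal). -/
noncomputable def mbst (sh : SkewShape) : ℕ :=
  {tc : ℕ × (ℕ → ℕ → ℕ) | IsNormalizedTab sh tc.1 tc.2 ∧
    IsMinBSD sh (tabDecomp tc.1 tc.2)}.ncard

/-- The tableau `(m, c)` corresponds to the interval set `I`: in terms of the code,
the strip added from `c s` to `c (s+1)` replaces the vertical step at position `u`
by the one at position `v`, for some pair `(u,v) ∈ I`. -/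
def TabCorresponds (sh : SkewShape) (m : ℕ) (c : ℕ → ℕ → ℕ) (I : Finset (ℤ × ℤ)) : Prop :=
  ∀ s, s < m → ∀ u v : ℤ,
    (vertStep (c s) u ∧ ¬ vertStep (c (s + 1)) u ∧
      vertStep (c (s + 1)) v ∧ ¬ vertStep (c s) v) →
    (u, v) ∈ I

/-- `ht(B)`: one less than the number of rows of a border strip. -/
noncomputable def stripHt (B : Set (ℤ × ℤ)) : ℕ := {i : ℤ | ∃ j : ℤ, (i, j) ∈ B}.ncard - 1

/-- `ht(T)`: the sum of the heights of the strips of a tableau. -/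
noncomputable def htTab (m : ℕ) (c : ℕ → ℕ → ℕ) : ℕ :=
  ∑ s ∈ Finset.range m, stripHt (tabStrip c s)

/-- The type of an interval set: the multiset of the numbers `v − u`. -/
def intervalSetType (I : Finset (ℤ × ℤ)) : Multiset ℕ :=
  I.val.map fun p => (p.2 - p.1).toNat

/-- The decomposition `D` has type `σ`: for every `n`, the multiplicity of `n` in `σ`
is the number of strips of `D` of size `n`. -/
def DecompHasType (D : Set (Set (ℤ × ℤ))) (σ : Multiset ℕ) : Prop :=
  ∀ n : ℕ, Multiset.count n σ = {B ∈ D | B.ncard = n}.ncard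

/-- `is_σ(λ/μ)`: the number of interval sets of type `σ`. -/
noncomputable def isTyped (sh : SkewShape) (σ : Multiset ℕ) : ℕ :=
  {I : Finset (ℤ × ℤ) | IsIntervalSet sh I ∧ intervalSetType I = σ}.ncard

/-- `mbsd_σ(λ/μ)`: the number of minimal border strip decompositions of type `σ`. -/
noncomputable def mbsdTyped (sh : SkewShape) (σ : Multiset ℕ) : ℕ :=
  {D : Set (Set (ℤ × ℤ)) | IsMinBSD sh D ∧ DecompHasType D σ}.ncard

/-- `c(I)`: the number of crossings `u_i < u_j < v_i < v_j` of an interval set. -/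
def crossings (I : Finset (ℤ × ℤ)) : ℕ :=
  ((I ×ˢ I).filter fun q => q.1.1 < q.2.1 ∧ q.2.1 < q.1.2 ∧ q.1.2 < q.2.2).card

/-- `I` has no crossings. -/
def Noncrossing (I : Finset (ℤ × ℤ)) : Prop :=
  ∀ p ∈ I, ∀ q ∈ I, ¬ (p.1 < q.1 ∧ q.1 < p.2 ∧ p.2 < q.2)

/-- `z(λ/μ) = z(1) + ⋯ + z(r)` computed from the crossing-free interval set `P`:
`z(i) = #{j : u_i < j < v_i, c_j = 0}`. -/
noncomputable def zval (sh : SkewShape) (P : Finset (ℤ × ℤ)) : ℕ :=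
  ∑ p ∈ P, {j : ℤ | p.1 < j ∧ j < p.2 ∧ vertStep sh.lam j}.ncard

/-- The tableau has type `ν` (a list of strip sizes, in order). -/
def TabHasType (c : ℕ → ℕ → ℕ) (ν : List ℕ) : Prop :=
  ∀ s, s < ν.length → (tabStrip c s).ncard = ν.getD s 0

/-- `χ^{λ/μ}(ν) = Σ_T (−1)^{ht(T)}`, summed over all border strip tableaux of shape
`λ/μ` and type `ν` (the Murnaghan–Nakayama rule). -/
noncomputable def chi (sh : SkewShape) (ν : List ℕ) : ℤ :=
  ∑ᶠ c ∈ {c : ℕ → ℕ → ℕ | IsNormalizedTab sh ν.length c ∧ TabHasType c ν},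
    (-1 : ℤ) ^ htTab ν.length c

/-- `h_a(1^t)` as a polynomial in `t`: the binomial coefficient
`C(t + a − 1, a) = t(t+1)⋯(t+a−1)/a!`, and `0` for `a < 0`. -/
noncomputable def hPoly (a : ℤ) : Polynomial ℚ :=
  if a < 0 then 0
  else Polynomial.C ((a.toNat.factorial : ℚ))⁻¹ *
    ∏ s ∈ Finset.range a.toNat, (Polynomial.X + Polynomial.C (s : ℚ))

/-- The principal specialization `s_{λ/μ}(1^t)` as a polynomial in `t`, via the
Jacobi–Trudi identity: `det ( C(t + λ_i − μ_j − i + j − 1, λ_i − μ_j − i + j) )`. -/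
noncomputable def jtPoly (sh : SkewShape) (n : ℕ) : Polynomial ℚ :=
  (Matrix.of fun i j : Fin n =>
    hPoly ((sh.lam i : ℤ) - (sh.mu j : ℤ) - ((i : ℕ) : ℤ) + ((j : ℕ) : ℤ))).det

/-! ### Diagonals of a skew shape -/

/-- On the diagonal `j - i = c`, the inequality `f i ≤ j` cuts out a final segment of rows. Its
first row `A c` stays constant or drops by one when `c` increases by one: `A` is the boundary
path of `f`, read by content. -/
lemma exists_threshold (f : ℕ → ℕ) (hf : IsPartitionFn f) :
    ∃ A : ℤ → ℤ, (∀ c, 0 ≤ A c) ∧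
      (∀ c i, 0 ≤ i → ((f i.toNat : ℤ) ≤ i + c ↔ A c ≤ i)) ∧
      (∀ c, A (c + 1) = A c ∨ A (c + 1) = A c - 1) ∧
      ∃ L : ℕ, (∀ c, (L : ℤ) ≤ c → A c = 0) ∧ ∀ c, c ≤ -(L : ℤ) → A c = -c := by
  obtain ⟨hmono, N, hN⟩ := hf
  have hex : ∀ c : ℤ, ∃ i : ℕ, (f i : ℤ) ≤ i + c := fun c =>
    ⟨N + c.natAbs, by rw [hN _ (by omega)]; omega⟩
  have key : ∀ (c i : ℤ), 0 ≤ i →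
      ((f i.toNat : ℤ) ≤ i + c ↔ ((Nat.find (hex c) : ℕ) : ℤ) ≤ i) := by
    intro c i hi
    obtain ⟨n, rfl⟩ := Int.eq_ofNat_of_zero_le hi
    simp only [Int.toNat_natCast, Nat.cast_le]
    constructor
    · intro h
      exact Nat.find_min' (hex c) h
    · intro h
      have h1 := Nat.find_spec (hex c)
      have h2 := hmono _ _ h
      omega
  refine ⟨fun c => (Nat.find (hex c) : ℕ), fun c => by positivity, key, ?_, N + f 0, ?_, ?_⟩
  · intro c
    have h1 := key c
    have h2 := key (c + 1)
    have hx0 : 0 ≤ ((Nat.find (hex c) : ℕ) : ℤ) := by positivity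
    have hy0 : 0 ≤ ((Nat.find (hex (c + 1)) : ℕ) : ℤ) := by positivity
    show ((Nat.find (hex (c + 1)) : ℕ) : ℤ) = (Nat.find (hex c) : ℕ) ∨
      ((Nat.find (hex (c + 1)) : ℕ) : ℤ) = (Nat.find (hex c) : ℕ) - 1
    generalize ((Nat.find (hex c) : ℕ) : ℤ) = x at *
    generalize ((Nat.find (hex (c + 1)) : ℕ) : ℤ) = y at *
    have e1 : y ≤ x := by
      rw [← h2 x hx0]
      have := (h1 x hx0).2 le_rfl
      omega
    have e2 : x ≤ y + 1 := by
      rw [← h1 (y + 1) (by omega)]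
      have h3 := (h2 y hy0).2 le_rfl
      have h4 := hmono y.toNat (y + 1).toNat (by omega)
      omega
    omega
  · intro c hc
    have h := (key c 0 le_rfl).1 (by simp only [Int.toNat_zero]; push_cast at hc; omega)
    have : 0 ≤ ((Nat.find (hex c) : ℕ) : ℤ) := by positivity
    show ((Nat.find (hex c) : ℕ) : ℤ) = 0
    omega
  · intro c hc
    push_cast at hc
    have h := (key c (-c) (by omega)).1 (by rw [hN _ (by omega)]; omega)
    have h' : ¬ ((Nat.find (hex c) : ℕ) : ℤ) ≤ -c - 1 := by
      by_cases h0 : 0 ≤ -c - 1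
      · rw [← key c _ h0]; omega
      · have : 0 ≤ ((Nat.find (hex c) : ℕ) : ℤ) := by positivity
        omega
    show ((Nat.find (hex c) : ℕ) : ℤ) = -c
    omega

/-- A set of squares described diagonal by diagonal: on the diagonal of content `c = j - i` its
squares occupy the rows `a c ≤ i < b c`. Each of `a`, `b` stays constant or drops by one from
`c` to `c + 1`, and the diagonals of content outside `(-L, L)` are empty. -/
structure DiagData (C : Set (ℤ × ℤ)) where
  a : ℤ → ℤ
  b : ℤ → ℤ
  L : ℕ
  a_nonneg : ∀ c, 0 ≤ a c
  col_nonneg : ∀ c, 0 ≤ a c + c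
  le : ∀ c, a c ≤ b c
  mem : ∀ p, p ∈ C ↔ a (p.2 - p.1) ≤ p.1 ∧ p.1 < b (p.2 - p.1)
  a_step : ∀ c, a (c + 1) = a c ∨ a (c + 1) = a c - 1
  b_step : ∀ c, b (c + 1) = b c ∨ b (c + 1) = b c - 1
  empty_right : ∀ c, (L : ℤ) ≤ c → a c = b c
  empty_left : ∀ c, c ≤ -(L : ℤ) → a c = b c
  drop_left : ∀ c, c < -(L : ℤ) → b (c + 1) = b c - 1
  flat_right : ∀ c, (L : ℤ) ≤ c → a (c + 1) = a c

lemma exists_diagData (sh : SkewShape) : Nonempty (DiagData sh.cells) := by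
  obtain ⟨a, a0, ak, as, La, ar, al⟩ := exists_threshold sh.mu sh.mu_part
  obtain ⟨b, b0, bk, bs, Lb, br, bl⟩ := exists_threshold sh.lam sh.lam_part
  refine ⟨⟨a, b, La + Lb, a0, ?_, ?_, ?_, as, bs, ?_, ?_, ?_, ?_⟩⟩
  · intro c
    have := (ak c (a c) (a0 c)).2 le_rfl
    omega
  · intro c
    rw [← ak c _ (b0 c)]
    have := (bk c (b c) (b0 c)).2 le_rfl
    have := sh.mu_le (b c).toNat
    omega
  · rintro ⟨i, j⟩
    simp only [SkewShape.cells, skewCells, Set.mem_ofPred_eq]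
    by_cases hi : 0 ≤ i
    · rw [← ak _ _ hi, ← not_le (a := b _), ← bk _ _ hi]
      simp [hi]
    · have := a0 (j - i)
      constructor <;> intro h <;> omega
  · intro c hc
    rw [ar c (by omega), br c (by omega)]
  · intro c hc
    rw [al c (by omega), bl c (by omega)]
  · intro c hc
    rw [bl c (by omega), bl (c + 1) (by omega)]; ring
  · intro c hc
    rw [ar c (by omega), ar (c + 1) (by omega)]

namespace DiagData

variable {C : Set (ℤ × ℤ)} (d : DiagData C)

/-- The contents `c` such that the diagonal `c + 1` has one more square than the diagonal `c`.
Their number turns out to be the rank. -/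
def E : Set ℤ := {c | d.a (c + 1) = d.a c - 1 ∧ d.b (c + 1) = d.b c}

lemma mem_E (c : ℤ) : c ∈ d.E ↔ d.a (c + 1) = d.a c - 1 ∧ d.b (c + 1) = d.b c := Iff.rfl

lemma E_subset : d.E ⊆ Set.Ico (-(d.L : ℤ)) d.L := by
  rintro c ⟨h1, h2⟩
  have := d.drop_left c
  have := d.flat_right c
  simp only [Set.mem_Ico]
  omega

lemma finite (d : DiagData C) : C.Finite := by
  have h : C ⊆ (fun q : ℤ × ℤ => (q.1, q.1 + q.2)) ''
      (⋃ c ∈ Set.Icc (-(d.L : ℤ)) d.L, (Set.Ico (d.a c) (d.b c)) ×ˢ {c}) := by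
    rintro ⟨i, j⟩ h
    rw [d.mem] at h
    refine ⟨(i, j - i), ?_, by simp⟩
    have h1 := d.empty_right (j - i)
    have h2 := d.empty_left (j - i)
    simp only [Set.mem_iUnion]
    refine ⟨j - i, ⟨?_, ?_⟩, h, rfl⟩ <;> simp only at h <;> omega
  refine Set.Finite.subset (Set.Finite.image _ ?_) h
  exact Set.Finite.biUnion (Set.finite_Icc _ _) fun c _ =>
    (Set.finite_Ico _ _).prod (Set.finite_singleton _)

/-! ### The rank counts the upward steps -/

open Classical in
lemma ncard_diag (Q : ℤ → Prop) :
    (({p : ℤ × ℤ | p ∈ C ∧ Q (p.2 - p.1)}.ncard : ℕ) : ℤ) =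
      ∑ k ∈ Finset.range (2 * d.L), if Q (-(d.L : ℤ) + k) then
        d.b (-(d.L : ℤ) + k) - d.a (-(d.L : ℤ) + k) else 0 := by
  have h : {p : ℤ × ℤ | p ∈ C ∧ Q (p.2 - p.1)} =
      (((Finset.range (2 * d.L)).filter fun k : ℕ => Q (-(d.L : ℤ) + k)).biUnion fun k : ℕ =>
        (Finset.Ico (d.a (-(d.L : ℤ) + k)) (d.b (-(d.L : ℤ) + k))).image
          fun r => (r, r + (-(d.L : ℤ) + k)) : Finset (ℤ × ℤ)) := by
    ext ⟨i, j⟩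
    simp only [Set.mem_ofPred_eq, Finset.coe_biUnion, Set.mem_iUnion, Finset.coe_image,
      Set.mem_image, Finset.mem_coe, Finset.mem_filter, Finset.mem_range, Finset.mem_Ico,
      Prod.mk.injEq, d.mem]
    constructor
    · rintro ⟨h, hQ⟩
      have h1 := d.empty_right (j - i)
      have h2 := d.empty_left (j - i)
      have e : -(d.L : ℤ) + ((j - i + d.L).toNat : ℤ) = j - i := by omega
      refine ⟨(j - i + d.L).toNat, ⟨by omega, by rwa [e]⟩, i, ?_, rfl, ?_⟩ <;> rw [e]
      · exact h
      · ring
    · rintro ⟨k, ⟨hk, hQ⟩, r, hr, rfl, rfl⟩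
      rw [add_sub_cancel_left]
      exact ⟨hr, hQ⟩
  rw [h, Set.ncard_coe_finset, Finset.card_biUnion]
  · rw [Finset.sum_filter]
    push_cast
    refine Finset.sum_congr rfl fun k _ => ?_
    split_ifs
    · rw [Finset.card_image_of_injective _ (fun x y hxy => (Prod.mk.inj hxy).1), Int.card_Ico]
      have := d.le (-(d.L : ℤ) + k)
      omega
    · rfl
  · intro x _ y _ hxy
    rw [Function.onFun, Finset.disjoint_left]
    rintro p hp hq
    simp only [Finset.mem_image] at hp hq
    obtain ⟨r, _, rfl⟩ := hp
    obtain ⟨s, _, hs⟩ := hq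
    have h1 := (Prod.mk.inj hs).1
    have h2 := (Prod.mk.inj hs).2
    omega

open Classical in
lemma ncard_E : ((d.E.ncard : ℕ) : ℤ) =
    ∑ k ∈ Finset.range (2 * d.L), if -(d.L : ℤ) + k ∈ d.E then 1 else 0 := by
  have h : d.E = (((Finset.range (2 * d.L)).filter fun k : ℕ => -(d.L : ℤ) + k ∈ d.E).image
      fun k : ℕ => -(d.L : ℤ) + k : Finset ℤ) := by
    ext c
    simp only [Finset.coe_image, Set.mem_image, Finset.mem_coe, Finset.mem_filter,
      Finset.mem_range]
    constructor
    · intro hc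
      have := d.E_subset hc
      simp only [Set.mem_Ico] at this
      have e : -(d.L : ℤ) + ((c + d.L).toNat : ℤ) = c := by omega
      exact ⟨(c + d.L).toNat, ⟨by omega, by rwa [e]⟩, e⟩
    · rintro ⟨k, ⟨_, hk⟩, rfl⟩
      exact hk
  conv_lhs => rw [h]
  rw [Set.ncard_coe_finset, Finset.card_image_of_injective _ (fun x y hxy => by
    simpa using hxy), Finset.card_filter]
  push_cast
  rfl

end DiagData

lemma outside_iff (sh : SkewShape) (d : DiagData sh.cells) (p : ℤ × ℤ) :
    (p ∈ sh.cells ∧ ∃ q : ℤ × ℤ, OutsideCorner sh q ∧ ∃ n : ℕ, p = (q.1 + n, q.2 + n)) ↔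
      (p ∈ sh.cells ∧ (d.a (p.2 - p.1 - 1) = d.a (p.2 - p.1) + 1 ∧
        d.a (p.2 - p.1 + 1) = d.a (p.2 - p.1))) := by
  refine and_congr_right fun hp => ?_
  obtain ⟨i, j⟩ := p
  obtain ⟨c, rfl⟩ : ∃ c, j = i + c := ⟨j - i, by ring⟩
  have a1 := d.a_step (c - 1)
  have b1 := d.b_step (c - 1)
  have a2 := d.a_step c
  have b2 := d.b_step c
  rw [sub_add_cancel] at a1 b1
  rw [d.mem] at hp
  simp only [add_sub_cancel_left] at hp ⊢
  constructor
  · rintro ⟨⟨x, y⟩, ⟨h1, h2, h3⟩, n, hn⟩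
    simp only [Prod.mk.injEq] at hn
    simp only [d.mem] at h1 h2 h3
    rw [show y - x = c by omega] at h1
    rw [show y - (x - 1) = c + 1 by omega] at h2
    rw [show y - 1 - x = c - 1 by omega] at h3
    omega
  · rintro ⟨h1, h2⟩
    refine ⟨(d.a c, d.a c + c), ⟨?_, ?_, ?_⟩, (i - d.a c).toNat, ?_⟩
    · simp only [d.mem, add_sub_cancel_left]; omega
    · simp only [d.mem]
      rw [show d.a c + c - (d.a c - 1) = c + 1 by ring]; omega
    · simp only [d.mem]
      rw [show d.a c + c - 1 - d.a c = c - 1 by ring]; omega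
    · ext <;> simp <;> omega

lemma inside_iff (sh : SkewShape) (d : DiagData sh.cells) (p : ℤ × ℤ) :
    (p ∈ sh.cells ∧ ∃ q : ℤ × ℤ, InsideCorner sh q ∧ ∃ n : ℕ, p = (q.1 + n, q.2 + n)) ↔
      (p ∈ sh.cells ∧ (d.a (p.2 - p.1 - 1) = d.a (p.2 - p.1) ∧
        d.a (p.2 - p.1 + 1) = d.a (p.2 - p.1) - 1)) := by
  refine and_congr_right fun hp => ?_
  obtain ⟨i, j⟩ := p
  obtain ⟨c, rfl⟩ : ∃ c, j = i + c := ⟨j - i, by ring⟩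
  have a1 := d.a_step (c - 1)
  have b1 := d.b_step (c - 1)
  have a2 := d.a_step c
  have b2 := d.b_step c
  rw [sub_add_cancel] at a1 b1
  rw [d.mem] at hp
  simp only [add_sub_cancel_left] at hp ⊢
  constructor
  · rintro ⟨⟨x, y⟩, ⟨h1, h2, h3, h4⟩, n, hn⟩
    simp only [Prod.mk.injEq] at hn
    simp only [d.mem] at h1 h2 h3 h4
    rw [show y - x = c by omega] at h1
    rw [show y - (x - 1) = c + 1 by omega] at h2
    rw [show y - 1 - x = c - 1 by omega] at h3
    rw [show y - 1 - (x - 1) = c by omega] at h4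
    omega
  · rintro ⟨h1, h2⟩
    refine ⟨(d.a c, d.a c + c), ⟨?_, ?_, ?_, ?_⟩, (i - d.a c).toNat, ?_⟩
    · simp only [d.mem, add_sub_cancel_left]; omega
    · simp only [d.mem]
      rw [show d.a c + c - (d.a c - 1) = c + 1 by ring]; omega
    · simp only [d.mem]
      rw [show d.a c + c - 1 - d.a c = c - 1 by ring]; omega
    · simp only [d.mem]
      rw [show d.a c + c - 1 - (d.a c - 1) = c by ring]; omega
    · ext <;> simp <;> omega

/-- Abel summation. With `n c = b c - a c` and `α c = a c - a (c + 1)`, the diagonal `c` contributes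
`n c * (α (c - 1) - α c)` to `d⁺ - d⁻`, while `c` lies in `E` exactly when
`α c * (n (c + 1) - n c) = 1`, this product being `0` otherwise. -/
lemma rank_eq (sh : SkewShape) (d : DiagData sh.cells) : sh.rank = d.E.ncard := by
  classical
  suffices h : ((sh.dplus : ℕ) : ℤ) = sh.dminus + d.E.ncard by
    unfold SkewShape.rank; omega
  have h1 := d.ncard_diag fun c => d.a (c - 1) = d.a c + 1 ∧ d.a (c + 1) = d.a c
  have h2 := d.ncard_diag fun c => d.a (c - 1) = d.a c ∧ d.a (c + 1) = d.a c - 1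
  have h3 := d.ncard_E
  have e1 : sh.dplus = _ := congrArg Set.ncard (Set.ext (outside_iff sh d))
  have e2 : sh.dminus = _ := congrArg Set.ncard (Set.ext (inside_iff sh d))
  rw [e1, e2, h3]
  refine h1.trans ?_
  refine Eq.trans ?_ (congrArg (· + _) h2.symm)
  simp only [d.mem_E]
  rw [← Finset.sum_add_distrib, ← sub_eq_zero, ← Finset.sum_sub_distrib]
  -- the quantity whose differences telescope
  let T : ℕ → ℤ := fun k => (d.b (-(d.L : ℤ) + k) - d.a (-(d.L : ℤ) + k)) *
    (d.a (-(d.L : ℤ) + k - 1) - d.a (-(d.L : ℤ) + k))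
  rw [Finset.sum_congr rfl (g := fun k => T k - T (k + 1)), Finset.sum_range_sub']
  · have t0 := d.empty_left (-(d.L : ℤ)) le_rfl
    have t1 := d.empty_right (d.L : ℤ) le_rfl
    simp only [T]
    push_cast
    rw [show -(d.L : ℤ) + 2 * d.L = d.L by ring, t1, add_zero, t0]
    ring
  · intro k _
    simp only [T]
    push_cast
    rw [← add_assoc, add_sub_cancel_right]
    generalize -(d.L : ℤ) + (k : ℤ) = c
    have a1 := d.a_step (c - 1)
    have a2 := d.a_step c
    have b2 := d.b_step c
    rw [sub_add_cancel] at a1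
    have a1' : d.a (c - 1) = d.a c ∨ d.a (c - 1) = d.a c + 1 := by omega
    clear h1 h2 h3 e1 e2 T
    rcases a1' with a1 | a1 <;> rcases a2 with a2 | a2 <;> rcases b2 with b2 | b2 <;>
      split_ifs <;> rw [a1, a2, b2] <;> omega

/-! ### The lower bound -/

lemma content_between {B : Set (ℤ × ℤ)} {p q : ℤ × ℤ} (hp : p ∈ B)
    (h : Relation.ReflTransGen (fun x y => y ∈ B ∧ CellAdj x y) p q) (c : ℤ)
    (h1 : p.2 - p.1 ≤ c) (h2 : c ≤ q.2 - q.1) : ∃ x ∈ B, x.2 - x.1 = c := by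
  induction h with
  | refl => exact ⟨p, hp, by omega⟩
  | @tail y z _ hz ih =>
    by_cases hc : c ≤ y.2 - y.1
    · exact ih hc
    · refine ⟨z, hz.1, ?_⟩
      have := hz.2
      unfold CellAdj at this
      omega

/-- A border strip meets each diagonal at most once. -/
lemma strip_diag_unique {B : Set (ℤ × ℤ)} (hB : IsBorderStrip B) {p q : ℤ × ℤ} (hp : p ∈ B)
    (hq : q ∈ B) (h : p.2 - p.1 = q.2 - q.1) : p = q := by
  have key : ∀ p ∈ B, ∀ q ∈ B, p.2 - p.1 = q.2 - q.1 → ¬ p.1 < q.1 := by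
    intro p hp q hq h hlt
    refine hB.2.2 p ?_
    obtain ⟨f, g, hf, hg, -, rfl⟩ := hB.1
    simp only [skewCells, Set.mem_ofPred_eq] at hp hq ⊢
    have f1 := hf.1 p.1.toNat (p.1 + 1).toNat (by omega)
    have f2 := hf.1 (p.1 + 1).toNat q.1.toNat (by omega)
    have g1 := hg.1 p.1.toNat (p.1 + 1).toNat (by omega)
    omega
  have h1 := key p hp q hq h
  have h2 := key q hq p hp h.symm
  ext <;> omega

namespace DiagData

variable {C : Set (ℤ × ℤ)} (d : DiagData C)

/-- Across a step in `E` the diagonal gains a square, so some strip begins there. -/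
lemma exists_strip_start {D : Set (Set (ℤ × ℤ))} (hB : ∀ B ∈ D, IsBorderStrip B)
    (hdisj : D.PairwiseDisjoint id) (hU : ⋃₀ D = C) {c : ℤ} (hc : c ∈ d.E) :
    ∃ B ∈ D, (∃ x ∈ B, x.2 - x.1 = c + 1) ∧ ¬ ∃ x ∈ B, x.2 - x.1 = c := by
  by_contra! hcon
  have h : ∀ r : ℤ, ∃ s : ℤ, r ∈ Finset.Ico (d.a (c + 1)) (d.b (c + 1)) →
      s ∈ Finset.Ico (d.a c) (d.b c) ∧
        ∃ B ∈ D, (r, r + (c + 1)) ∈ B ∧ (s, s + c) ∈ B := by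
    intro r
    by_cases hr : r ∈ Finset.Ico (d.a (c + 1)) (d.b (c + 1))
    · have hm : (r, r + (c + 1)) ∈ ⋃₀ D := by
        rw [hU, d.mem]; simpa using hr
      obtain ⟨B, hBD, hrB⟩ := hm
      obtain ⟨⟨x, y⟩, hx, hxc⟩ := hcon B hBD ⟨_, hrB, by simp⟩
      obtain rfl : y = x + c := by simp only at hxc; omega
      have hxC : (x, x + c) ∈ C := hU ▸ ⟨B, hBD, hx⟩
      rw [d.mem] at hxC
      exact ⟨x, fun _ => ⟨by simpa using hxC, B, hBD, hrB, hx⟩⟩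
    · exact ⟨0, fun h => absurd h hr⟩
  choose s hs using h
  have hle := Finset.card_le_card_of_injOn s (fun r hr => (hs r hr).1) (by
    intro r hr r' hr' hss
    obtain ⟨-, B, hBD, h1, h2⟩ := hs r hr
    obtain ⟨-, B', hBD', h1', h2'⟩ := hs r' hr'
    rw [← hss] at h2'
    have : B = B' := hdisj.elim hBD hBD' (Set.not_disjoint_iff.2 ⟨_, h2, h2'⟩)
    subst this
    exact (Prod.mk.inj (strip_diag_unique (hB B hBD) h1 h1' (by simp))).1)
  rw [Int.card_Ico, Int.card_Ico] at hle
  have h1 := hc.1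
  have h2 := hc.2
  have := d.le c
  omega

lemma lower_bound {D : Set (Set (ℤ × ℤ))} (hB : ∀ B ∈ D, IsBorderStrip B)
    (hdisj : D.PairwiseDisjoint id) (hU : ⋃₀ D = C) : d.E.ncard ≤ D.ncard := by
  have hfin : D.Finite := d.finite.finite_subsets.subset fun B hBD =>
    hU ▸ Set.subset_sUnion_of_mem hBD
  have h := fun c : ℤ => fun hc : c ∈ d.E => d.exists_strip_start hB hdisj hU hc
  choose! F hF using h
  refine Set.ncard_le_ncard_of_injOn F (fun c hc => (hF c hc).1) ?_ hfin
  have key : ∀ c ∈ d.E, ∀ c' ∈ d.E, F c = F c' → ¬ c < c' := by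
    intro c hc c' hc' heq hlt
    obtain ⟨hD, ⟨x, hx, hxc⟩, -⟩ := hF c hc
    obtain ⟨-, ⟨y, hy, hyc⟩, hno⟩ := hF c' hc'
    rw [← heq] at hy hno
    exact hno (content_between hx ((hB _ hD).2.1.2 x hx y hy) c' (by omega) (by omega))
  intro c hc c' hc' heq
  have h1 := key c hc c' hc' heq
  have h2 := key c' hc' c hc heq.symm
  omega

end DiagData

/-! ### A decomposition attaining the bound -/

/-- A finite set of squares in the quadrant which is convex for the product order is a skew
diagram: it is the difference of the lower set it generates and a smaller lower set. -/
lemma isSkewDiagram_of_convex {B : Set (ℤ × ℤ)} (hfin : B.Finite)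
    (hpos : ∀ p ∈ B, 0 ≤ p.1 ∧ 0 ≤ p.2)
    (hconv : ∀ p ∈ B, ∀ r ∈ B, ∀ q : ℤ × ℤ, p ≤ q → q ≤ r → q ∈ B) : IsSkewDiagram B := by
  classical
  let emb : ℕ × ℕ → ℤ × ℤ := fun x => ((x.1 : ℤ), (x.2 : ℤ))
  let S : Set (ℕ × ℕ) := {x | ∃ p ∈ B, emb x ≤ p}
  have hS : S.Finite := by
    have : S ⊆ ⋃ p ∈ B, Set.Iic ((p.1.toNat, p.2.toNat) : ℕ × ℕ) := by
      rintro ⟨x, y⟩ ⟨p, hp, h1, h2⟩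
      simp only [Set.mem_iUnion]
      simp only [emb] at h1 h2
      exact ⟨p, hp, Prod.mk_le_mk.2 ⟨by omega, by omega⟩⟩
    exact (hfin.biUnion fun p _ => Set.finite_Iic _).subset this
  have emb_mono : ∀ x y : ℕ × ℕ, x ≤ y → emb x ≤ emb y := by
    rintro ⟨x, x'⟩ ⟨y, y'⟩ h
    have := Prod.mk_le_mk.1 h
    exact Prod.mk_le_mk.2 ⟨by omega, by omega⟩
  let Y1 : YoungDiagram := ⟨hS.toFinset, by
    intro x y hyx hx
    simp only [Set.Finite.coe_toFinset] at hx ⊢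
    obtain ⟨p, hp, h⟩ := hx
    exact ⟨p, hp, (emb_mono _ _ hyx).trans h⟩⟩
  let Y2 : YoungDiagram := ⟨hS.toFinset.filter fun x => emb x ∉ B, by
    intro x y hyx hx
    simp only [Finset.coe_filter, Set.Finite.mem_toFinset, Set.mem_ofPred_eq] at hx ⊢
    obtain ⟨⟨p, hp, h⟩, hxB⟩ := hx
    exact ⟨⟨p, hp, (emb_mono _ _ hyx).trans h⟩,
      fun hy => hxB (hconv _ hy p hp _ (emb_mono _ _ hyx) h)⟩⟩
  have hY1 : ∀ x : ℕ × ℕ, x ∈ Y1 ↔ x ∈ S := fun x => by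
    rw [← YoungDiagram.mem_cells]; simp [Y1]
  have hY2 : ∀ x : ℕ × ℕ, x ∈ Y2 ↔ x ∈ S ∧ emb x ∉ B := fun x => by
    rw [← YoungDiagram.mem_cells]; simp [Y2]
  have hpart : ∀ Y : YoungDiagram, IsPartitionFn Y.rowLen := fun Y =>
    ⟨fun i j h => Y.rowLen_anti i j h, Y.colLen 0, fun i hi => by
      by_contra h0
      have : (i, 0) ∈ Y := YoungDiagram.mem_iff_lt_rowLen.2 (by omega)
      rw [YoungDiagram.mem_iff_lt_colLen] at this
      omega⟩
  refine ⟨Y1.rowLen, Y2.rowLen, hpart _, hpart _, ?_, ?_⟩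
  · intro i
    by_contra! h
    have h1 : (i, Y1.rowLen i) ∈ Y2 := YoungDiagram.mem_iff_lt_rowLen.2 h
    have h2 := YoungDiagram.mem_iff_lt_rowLen.1 ((hY1 _).2 ((hY2 _).1 h1).1)
    omega
  · ext ⟨i, j⟩
    simp only [skewCells, Set.mem_ofPred_eq]
    constructor
    · intro h
      have hp := hpos _ h
      simp only at hp
      obtain ⟨m, rfl⟩ := Int.eq_ofNat_of_zero_le hp.1
      obtain ⟨n, rfl⟩ := Int.eq_ofNat_of_zero_le hp.2
      have h1 : (m, n) ∈ Y1 := (hY1 _).2 ⟨_, h, le_rfl⟩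
      have h2 : (m, n) ∉ Y2 := fun h' => ((hY2 _).1 h').2 h
      rw [YoungDiagram.mem_iff_lt_rowLen] at h1 h2
      simp only [Int.toNat_natCast]
      omega
    · rintro ⟨hi, h2, h1⟩
      have hj : 0 ≤ j := le_trans (by positivity) h2
      obtain ⟨m, rfl⟩ := Int.eq_ofNat_of_zero_le hi
      obtain ⟨n, rfl⟩ := Int.eq_ofNat_of_zero_le hj
      simp only [Int.toNat_natCast, Nat.cast_le, Nat.cast_lt] at h1 h2
      have h1' : (m, n) ∈ Y1 := YoungDiagram.mem_iff_lt_rowLen.2 h1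
      have h2' : (m, n) ∉ Y2 := fun h => by
        have := YoungDiagram.mem_iff_lt_rowLen.1 h; omega
      by_contra hB
      exact h2' ((hY2 _).2 ⟨(hY1 _).1 h1', hB⟩)

lemma exists_primitive (g : ℤ → ℤ) : ∃ s : ℤ → ℤ, ∀ c, s (c + 1) = s c + g c := by
  refine ⟨fun c => (∑ k ∈ Finset.range c.toNat, g k) -
    ∑ k ∈ Finset.range (-c).toNat, g (-(k : ℤ) - 1), fun c => ?_⟩
  simp only
  rcases le_or_gt 0 c with h | h
  · rw [show (c + 1).toNat = c.toNat + 1 by omega, Finset.sum_range_succ,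
      show (-(c + 1)).toNat = 0 by omega, show (-c).toNat = 0 by omega, Int.toNat_of_nonneg h]
    simp
  · rw [show (-c).toNat = (-(c + 1)).toNat + 1 by omega, Finset.sum_range_succ,
      show (c + 1).toNat = 0 by omega, show c.toNat = 0 by omega,
      show -((-(c + 1)).toNat : ℤ) - 1 = c by omega]
    simp

/-- A set of squares `(k - s x, k - s x + x)` with `x` running over an interval of contents
starting at `c`, where `s` increases by `0` (a step to the right) or `1` (a step up) at each
content, is a border strip. -/
lemma isBorderStrip_path (s : ℤ → ℤ) (hs : ∀ c, s (c + 1) = s c ∨ s (c + 1) = s c + 1)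
    (k c : ℤ) (T : Set ℤ) (hc : c ∈ T) (hT : ∀ x ∈ T, c ≤ x ∧ ∀ y, c ≤ y → y ≤ x → y ∈ T)
    (hfin : T.Finite) (hpos : ∀ x ∈ T, 0 ≤ k - s x ∧ 0 ≤ k - s x + x) :
    IsBorderStrip ((fun x => (k - s x, k - s x + x)) '' T) := by
  have hmono : ∀ x y, x ≤ y → s x ≤ s y ∧ s y - s x ≤ y - x := by
    intro x y hxy
    induction y, hxy using Int.leInduction with
    | base => simp
    | succ n hn ih => have := hs n; omega
  have hadj : ∀ x, CellAdj (k - s x, k - s x + x) (k - s (x + 1), k - s (x + 1) + (x + 1)) := by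
    intro x
    unfold CellAdj
    have := hs x
    simp only
    omega
  have hadj' : ∀ x, CellAdj (k - s (x + 1), k - s (x + 1) + (x + 1)) (k - s x, k - s x + x) := by
    intro x
    unfold CellAdj
    have := hs x
    simp only
    omega
  refine ⟨?_, ⟨⟨_, c, hc, rfl⟩, ?_⟩, ?_⟩
  · refine isSkewDiagram_of_convex (hfin.image _) ?_ ?_
    · rintro _ ⟨x, hx, rfl⟩
      exact hpos x hx
    · rintro _ ⟨x, hx, rfl⟩ _ ⟨y, hy, rfl⟩ ⟨i, j⟩ h1 h2
      rw [Prod.mk_le_mk] at h1 h2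
      -- comparable squares of the path share a row or a column
      rcases le_total x y with hxy | hxy
      · have m0 := hmono x y hxy
        have hz1 : x ≤ j - i := by omega
        have hz2 : j - i ≤ y := by omega
        have m1 := hmono _ _ hz1
        have m2 := hmono _ _ hz2
        exact ⟨j - i, (hT y hy).2 _ ((hT x hx).1.trans hz1) hz2,
          Prod.ext (by simp only; omega) (by simp only; omega)⟩
      · have m0 := hmono y x hxy
        have hz1 : y ≤ j - i := by omega
        have hz2 : j - i ≤ x := by omega
        have m1 := hmono _ _ hz1
        have m2 := hmono _ _ hz2
        exact ⟨j - i, (hT x hx).2 _ ((hT y hy).1.trans hz1) hz2,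
          Prod.ext (by simp only; omega) (by simp only; omega)⟩
  · have path : ∀ x, c ≤ x → x ∈ T →
        Relation.ReflTransGen (fun u v => v ∈ (fun x => (k - s x, k - s x + x)) '' T ∧
          CellAdj u v) (k - s c, k - s c + c) (k - s x, k - s x + x) ∧
        Relation.ReflTransGen (fun u v => v ∈ (fun x => (k - s x, k - s x + x)) '' T ∧
          CellAdj u v) (k - s x, k - s x + x) (k - s c, k - s c + c) := by
      intro x hx
      induction x, hx using Int.leInduction with
      | base => exact fun _ => ⟨.refl, .refl⟩
      | succ n hn ih =>
        intro hmem
        have hnT := (hT _ hmem).2 n hn (by omega)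
        obtain ⟨h1, h2⟩ := ih hnT
        exact ⟨h1.tail ⟨⟨n + 1, hmem, rfl⟩, hadj n⟩, h2.head ⟨⟨n, hnT, rfl⟩, hadj' n⟩⟩
    rintro _ ⟨x, hx, rfl⟩ _ ⟨y, hy, rfl⟩
    exact (path x (hT x hx).1 hx).2.trans (path y (hT y hy).1 hy).1
  · rintro ⟨i, j⟩ ⟨⟨x, -, hx⟩, -, -, ⟨y, -, hy⟩⟩
    simp only [Prod.mk.injEq] at hx hy
    obtain rfl : x = y := by omega
    omega

namespace DiagData

variable {C : Set (ℤ × ℤ)} (d : DiagData C)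

/-- The contents of the strip of the decomposition that begins on the diagonal `c + 1`, at its
first square `(a (c + 1), a (c + 1) + c + 1)`: those `x > c` such that the path of squares
with `row + s content` constant has not left the shape up to content `x`. -/
def stripContents (s : ℤ → ℤ) (c : ℤ) : Set ℤ :=
  {x | c + 1 ≤ x ∧ ∀ y, c + 1 ≤ y → y ≤ x →
    d.a y ≤ d.a (c + 1) + s (c + 1) - s y ∧ d.a (c + 1) + s (c + 1) - s y < d.b y}

/-- The strip with contents `stripContents`. -/
def strip (s : ℤ → ℤ) (c : ℤ) : Set (ℤ × ℤ) :=
  (fun x => (d.a (c + 1) + s (c + 1) - s x, d.a (c + 1) + s (c + 1) - s x + x)) ''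
    d.stripContents s c

lemma start_mem (s : ℤ → ℤ) {c : ℤ} (hc : c ∈ d.E) : c + 1 ∈ d.stripContents s c := by
  refine ⟨le_rfl, fun y h1 h2 => ?_⟩
  obtain rfl : y = c + 1 := le_antisymm h2 h1
  have := hc.1
  have := hc.2
  have := d.le c
  omega

lemma exists_decomposition : ∃ D : Set (Set (ℤ × ℤ)),
    (∀ B ∈ D, IsBorderStrip B) ∧ D.PairwiseDisjoint id ∧ ⋃₀ D = C ∧ D.ncard = d.E.ncard := by
  classical
  -- go up exactly where both boundary paths do, and to the right elsewhere
  obtain ⟨s, hs⟩ := exists_primitive fun c =>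
    if d.a (c + 1) = d.a c - 1 ∧ d.b (c + 1) = d.b c - 1 then 1 else 0
  have hs1 : ∀ c, d.a (c + 1) = d.a c - 1 ∧ d.b (c + 1) = d.b c - 1 → s (c + 1) = s c + 1 := by
    intro c h; rw [hs c, if_pos h]
  have hs0 : ∀ c, ¬ (d.a (c + 1) = d.a c - 1 ∧ d.b (c + 1) = d.b c - 1) → s (c + 1) = s c := by
    intro c h; rw [hs c, if_neg h, add_zero]
  have hstep : ∀ c, s (c + 1) = s c ∨ s (c + 1) = s c + 1 := fun c => by
    by_cases h : d.a (c + 1) = d.a c - 1 ∧ d.b (c + 1) = d.b c - 1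
    · exact Or.inr (hs1 c h)
    · exact Or.inl (hs0 c h)
  have hstrip : ∀ c ∈ d.E, IsBorderStrip (d.strip s c) := by
    intro c hc
    refine isBorderStrip_path s hstep _ (c + 1) _ (d.start_mem s hc) ?_ ?_ ?_
    · exact fun x hx => ⟨hx.1, fun y h1 h2 => ⟨h1, fun z h3 h4 => hx.2 z h3 (h4.trans h2)⟩⟩
    · refine (Set.finite_Icc (c + 1) d.L).subset fun x hx => ⟨hx.1, ?_⟩
      have h1 := hx.2 x hx.1 le_rfl
      have h2 := d.empty_right x
      omega
    · intro x hx
      have h1 := hx.2 x hx.1 le_rfl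
      have h2 := d.a_nonneg x
      have h3 := d.col_nonneg x
      omega
  -- continued back past its first square, the path of a strip leaves the shape
  have key : ∀ c ∈ d.E, ∀ c' ∈ d.E, c < c' → Disjoint (d.strip s c) (d.strip s c') := by
    intro c hc c' hc' hlt
    rw [Set.disjoint_left]
    rintro _ ⟨x, hx, rfl⟩ ⟨y, hy, hxy⟩
    simp only [Prod.mk.injEq] at hxy
    obtain rfl : x = y := by omega
    have h1 := hx.2 c' (by omega) (by have := hy.1; omega)
    have h2 := hs0 c' (by have := hc'.2; omega)
    have h3 := hc'.1
    omega
  have hdisj : ∀ c ∈ d.E, ∀ c' ∈ d.E, c ≠ c' → Disjoint (d.strip s c) (d.strip s c') := by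
    intro c hc c' hc' hne
    rcases lt_or_gt_of_ne hne with h | h
    · exact key c hc c' hc' h
    · exact (key c' hc' c hc h).symm
  refine ⟨d.strip s '' d.E, ?_, ?_, ?_, ?_⟩
  · rintro _ ⟨c, hc, rfl⟩
    exact hstrip c hc
  · rintro _ ⟨c, hc, rfl⟩ _ ⟨c', hc', rfl⟩ hne
    exact hdisj c hc c' hc' fun h => hne (by rw [h])
  · apply Set.Subset.antisymm
    · rintro p ⟨_, ⟨c, hc, rfl⟩, x, hx, rfl⟩
      rw [d.mem]
      simpa using hx.2 x hx.1 le_rfl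
    · have cover : ∀ c, -(d.L : ℤ) ≤ c → ∀ r, d.a c ≤ r → r < d.b c →
          ∃ e ∈ d.E, c ∈ d.stripContents s e ∧ r = d.a (e + 1) + s (e + 1) - s c := by
        intro c hc
        induction c, hc using Int.leInduction with
        | base =>
          intro r h1 h2
          have := d.empty_left (-(d.L : ℤ)) le_rfl
          omega
        | succ n hn ih =>
          intro r h1 h2
          have a1 := d.a_step n
          have b1 := d.b_step n
          have s1 := hs1 n
          have s0 := hs0 n
          -- `r + s (n + 1) - s n` is the row of the preceding square of the path
          by_cases hp : d.a n ≤ r + s (n + 1) - s n ∧ r + s (n + 1) - s n < d.b n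
          · obtain ⟨e, he, hmem, hr⟩ := ih _ hp.1 hp.2
            refine ⟨e, he, ⟨by have := hmem.1; omega, fun y hy1 hy2 => ?_⟩, by omega⟩
            rcases eq_or_lt_of_le hy2 with rfl | hlt
            · omega
            · exact hmem.2 y hy1 (by omega)
          · have hE : n ∈ d.E := by rw [d.mem_E]; omega
            refine ⟨n, hE, d.start_mem s hE, ?_⟩
            have := hE.1
            omega
      rintro ⟨i, j⟩ hp
      rw [d.mem] at hp
      have hl := d.empty_left (j - i)
      obtain ⟨e, he, hmem, hr⟩ := cover (j - i) (by simp only at hp; omega) i hp.1 hp.2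
      exact ⟨_, ⟨e, he, rfl⟩, j - i, hmem, Prod.ext (by simp only; omega) (by simp only; omega)⟩
  · refine Set.InjOn.ncard_image fun c hc c' hc' heq => ?_
    by_contra hne
    have h := hdisj c hc c' hc' hne
    rw [← heq, disjoint_self] at h
    exact (hstrip c hc).2.1.1.ne_empty h

end DiagData

/-- `rank(λ/μ)` is the least integer `r` such that `λ/μ` can be
partitioned into `r` pairwise disjoint border strips; in particular it is the number
of border strips in a minimal border strip decomposition of `λ/μ`. -/
theorem rank_isLeast_borderStripDecomposition (sh : SkewShape) :
    IsLeast {r : ℕ | ∃ D : Set (Set (ℤ × ℤ)), IsBSD sh D ∧ D.ncard = r} sh.rank := by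
  obtain ⟨d⟩ := exists_diagData sh
  rw [rank_eq sh d]
  constructor
  · obtain ⟨D, h1, h2, h3, h4⟩ := d.exists_decomposition
    exact ⟨D, ⟨h1, h2, h3⟩, h4⟩
  · rintro r ⟨D, ⟨h1, h2, h3⟩, rfl⟩
    exact d.lower_bound h1 h2 h3

end

end SkewBorder
end

section
/- Let (λ/μ)^♮ denote the skew shape obtained by rotating the diagram of λ/μ by 180°, i.e., a skew shape whose diagram is {(h−i, k−j) : (i,j) ∈ λ/μ} for suitable integers h and k. Then rank(λ/μ) = rank((λ/μ)^♮). -/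
/-!
Write `S` for the diagram of `λ/μ`, and for `v ∈ ℤ²` let `K_S(v)` be the number of pairs
`(r, p) ∈ S × S` with `p - r ∈ v + ℕ(1,1)`. The rank is a combination of such numbers:
`d⁺ + K_S(1,0) + K_S(0,1) = d⁻ + K_S(0,0) + K_S(1,1)` (`dplus_add_eq`).

To see this, consider all pairs `(q, p) ∈ S × S` with `p ∈ q + ℕ(1,1)`. The diagram is convex for
the product order (`mem_cells_of_between`), so for `v` among `(0,0), (1,0), (0,1), (1,1)` the pairs
with `q - v ∈ S` are counted by `K_S(v)` (`card_filter_shift`). By convexity again, top corners of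
either kind are the first squares of their diagonals, so `d⁺` and `d⁻` count the pairs in which `q`
is an outside, respectively inside, top corner (`dplus_eq`, `dminus_eq`). The identity then holds
pair by pair: if `c`, `u`, `l` are the truth values of `q - (1,1) ∈ S`, `q - (1,0) ∈ S` and
`q - (0,1) ∈ S`, convexity gives `c → u ∧ l`, whence
`[¬u ∧ ¬l] + u + l = [u ∧ l ∧ ¬c] + 1 + c`.

The numbers `K_S(v)` are invariant under the rotation `p ↦ (h, k) - p`, which exchanges the two
entries of a pair and preserves `p - r` (`shiftCount_rotate`).
-/

open Set Polynomial

namespace SkewBorder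

noncomputable section

/-- The number `K_S(v)` of pairs `(r, p)` of squares of `S` with `p - r ∈ v + ℕ(1,1)`. -/
def shiftCount (S : Set (ℤ × ℤ)) (v : ℤ × ℤ) : ℕ :=
  {x : (ℤ × ℤ) × (ℤ × ℤ) | x.1 ∈ S ∧ x.2 ∈ S ∧ ∃ n : ℕ, x.2 = x.1 + v + ((n : ℤ), (n : ℤ))}.ncard

theorem shiftCount_rotate (S S' : Set (ℤ × ℤ)) (c v : ℤ × ℤ) (hS : ∀ p, p ∈ S' ↔ c - p ∈ S) :
    shiftCount S' v = shiftCount S v := by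
  unfold shiftCount
  refine Set.ncard_congr (fun x _ => (c - x.2, c - x.1)) ?_ ?_ ?_
  · rintro ⟨r, p⟩ ⟨hr, hp, n, hn⟩
    simp only at hr hp hn
    refine ⟨(hS _).1 hp, (hS _).1 hr, n, ?_⟩
    simp only [hn]
    abel
  · rintro ⟨r, p⟩ ⟨r', p'⟩ _ _ he
    simp only [Prod.mk.injEq, sub_right_inj] at he
    rw [he.1, he.2]
  · rintro ⟨r, p⟩ ⟨hr, hp, n, hn⟩
    simp only at hr hp hn
    refine ⟨(c - p, c - r), ⟨(hS _).2 (by simpa using hp), (hS _).2 (by simpa using hr), n, ?_⟩, ?_⟩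
    · simp only [hn]
      abel
    · simp

/-- A skew diagram is convex for the product order. -/
theorem mem_cells_of_between (sh : SkewShape) {a b p : ℤ × ℤ} (ha : a ∈ sh.cells)
    (hb : b ∈ sh.cells) (h1 : a.1 ≤ p.1) (h2 : a.2 ≤ p.2) (h3 : p.1 ≤ b.1) (h4 : p.2 ≤ b.2) :
    p ∈ sh.cells := by
  obtain ⟨ha1, ha2, -⟩ := ha
  obtain ⟨-, -, hb3⟩ := hb
  have hm := sh.mu_part.1 a.1.toNat p.1.toNat (by omega)
  have hl := sh.lam_part.1 p.1.toNat b.1.toNat (by omega)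
  exact ⟨by omega, by omega, by omega⟩

theorem finite_cells (sh : SkewShape) : sh.cells.Finite := by
  obtain ⟨hanti, N, hN⟩ := sh.lam_part
  refine (Set.finite_Icc ((0, 0) : ℤ × ℤ) ((N : ℤ), (sh.lam 0 : ℤ))).subset ?_
  rintro ⟨i, j⟩ ⟨h1, h2, h3⟩
  simp only at h1 h2 h3
  have h0 := hanti 0 i.toNat (by omega)
  have hi : i.toNat < N := by
    by_contra hlt
    have := hN i.toNat (by omega)
    omega
  exact ⟨⟨h1, by simp only; omega⟩, ⟨by simp only; omega, by simp only; omega⟩⟩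

/-- The pairs `(q, p)` of squares of `λ/μ` with `p` weakly below `q` on the same diagonal. -/
def diagPairs (sh : SkewShape) : Set ((ℤ × ℤ) × (ℤ × ℤ)) :=
  {x | x.1 ∈ sh.cells ∧ x.2 ∈ sh.cells ∧ ∃ n : ℕ, x.2 = (x.1.1 + n, x.1.2 + n)}

theorem finite_diagPairs (sh : SkewShape) : (diagPairs sh).Finite :=
  ((finite_cells sh).prod (finite_cells sh)).subset fun _ hx => ⟨hx.1, hx.2.1⟩

/-- For a step `v ≥ 0`, removing `v` from the first entry turns the diagonal pairs `(q, p)` with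
`q - v ∈ S` into the pairs counted by `K_S(v)`; convexity gives back `q ∈ S`. -/
theorem card_filter_shift (sh : SkewShape) (a b : ℤ) (ha : 0 ≤ a) (hb : 0 ≤ b) :
    {x ∈ diagPairs sh | (x.1.1 - a, x.1.2 - b) ∈ sh.cells}.ncard
      = shiftCount sh.cells (a, b) := by
  unfold shiftCount
  refine Set.ncard_congr (fun x _ => ((x.1.1 - a, x.1.2 - b), x.2)) ?_ ?_ ?_
  · rintro ⟨⟨i, j⟩, p⟩ ⟨⟨hq, hp, n, hn⟩, hv⟩
    exact ⟨hv, hp, n, by simp_all⟩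
  · rintro ⟨⟨i, j⟩, p⟩ ⟨⟨i', j'⟩, p'⟩ _ _ he
    simpa using he
  · rintro ⟨⟨i, j⟩, p⟩ ⟨hr, hp, n, hn⟩
    simp only [Prod.mk_add_mk] at hr hp hn
    subst hn
    refine ⟨((i + a, j + b), _), ⟨⟨?_, hp, n, rfl⟩, by simpa using hr⟩, by simp⟩
    exact mem_cells_of_between sh hr hp (by simp only; omega) (by simp only; omega)
      (by simp only; omega) (by simp only; omega)

/-- If every `Q`-square is the first square of its diagonal, then the squares on the diagonals of
`Q`-squares are counted by the diagonal pairs whose first entry is a `Q`-square. -/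
theorem card_diagonals (sh : SkewShape) (Q : ℤ × ℤ → Prop)
    (hQ : ∀ q, Q q → q ∈ sh.cells ∧ (q.1 - 1, q.2 - 1) ∉ sh.cells) :
    {p : ℤ × ℤ | p ∈ sh.cells ∧ ∃ q : ℤ × ℤ, Q q ∧ ∃ n : ℕ, p = (q.1 + n, q.2 + n)}.ncard
      = {x ∈ diagPairs sh | Q x.1}.ncard := by
  symm
  refine Set.ncard_congr (fun x _ => x.2) ?_ ?_ ?_
  · rintro ⟨q, p⟩ ⟨⟨hq, hp, n, hn⟩, hQq⟩
    exact ⟨hp, q, hQq, n, hn⟩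
  · -- Two first squares of the same diagonal agree: the earlier one would otherwise force the
    -- square just before the later one into the diagram.
    have key : ∀ q q' : ℤ × ℤ, Q q → Q q' → ∀ n n' : ℕ,
        ((q.1 + n, q.2 + n) : ℤ × ℤ) = (q'.1 + n', q'.2 + n') → ¬ n < n' := by
      intro q q' hq hq' n n' he hlt
      simp only [Prod.mk.injEq] at he
      exact (hQ q hq).2 (mem_cells_of_between sh (hQ q' hq').1 (hQ q hq).1 (by simp only; omega)
        (by simp only; omega) (by simp only; omega) (by simp only; omega))
    rintro ⟨q, p⟩ ⟨q', p'⟩ ⟨⟨hq, hp, n, hn⟩, hQq⟩ ⟨⟨hq', hp', n', hn'⟩, hQq'⟩ he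
    simp only at hn hn' he hQq hQq'
    have e : ((q.1 + n, q.2 + n) : ℤ × ℤ) = (q'.1 + n', q'.2 + n') := by rw [← hn, ← hn', he]
    have h1 := key q q' hQq hQq' n n' e
    have h2 := key q' q hQq' hQq n' n e.symm
    simp only [Prod.mk.injEq] at e
    exact Prod.ext (Prod.ext (by simp only; omega) (by simp only; omega)) he
  · rintro p ⟨hp, q, hQq, n, hn⟩
    exact ⟨(q, p), ⟨⟨(hQ q hQq).1, hp, n, hn⟩, hQq⟩, rfl⟩

theorem dplus_eq (sh : SkewShape) :
    sh.dplus = {x ∈ diagPairs sh | OutsideCorner sh x.1}.ncard := by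
  refine card_diagonals sh _ fun q hq => ⟨hq.1, fun hc => hq.2.1 ?_⟩
  exact mem_cells_of_between sh hc hq.1 (by simp only; omega) (by simp only; omega)
    (by simp only; omega) (by simp only; omega)

theorem dminus_eq (sh : SkewShape) :
    sh.dminus = {x ∈ diagPairs sh | InsideCorner sh x.1}.ncard :=
  card_diagonals sh _ fun _ hq => ⟨hq.1, hq.2.2.2⟩

open Classical in
/-- The expression of `d⁺ - d⁻` through the numbers `K_S(v)`, written without subtraction. -/
theorem dplus_add_eq (sh : SkewShape) :
    sh.dplus + shiftCount sh.cells (1, 0) + shiftCount sh.cells (0, 1)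
      = sh.dminus + shiftCount sh.cells (0, 0) + shiftCount sh.cells (1, 1) := by
  have conv : ∀ P : (ℤ × ℤ) × (ℤ × ℤ) → Prop, {x ∈ diagPairs sh | P x}.ncard
      = ∑ x ∈ (finite_diagPairs sh).toFinset, if P x then 1 else 0 := by
    intro P
    rw [← Finset.card_filter, ← Set.ncard_coe_finset]
    congr 1
    ext x
    simp
  rw [dplus_eq, dminus_eq, ← card_filter_shift sh 1 0 (by simp) (by simp),
    ← card_filter_shift sh 0 1 (by simp) (by simp), ← card_filter_shift sh 0 0 (by simp) (by simp),
    ← card_filter_shift sh 1 1 (by simp) (by simp)]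
  simp only [conv, ← Finset.sum_add_distrib]
  refine Finset.sum_congr rfl ?_
  rintro ⟨⟨i, j⟩, p⟩ hx
  have hq : (i, j) ∈ sh.cells := ((finite_diagPairs sh).mem_toFinset.1 hx).1
  have hu : (i - 1, j - 1) ∈ sh.cells → (i - 1, j) ∈ sh.cells := fun hc =>
    mem_cells_of_between sh hc hq (by simp) (by simp) (by simp) (by simp)
  have hl : (i - 1, j - 1) ∈ sh.cells → (i, j - 1) ∈ sh.cells := fun hc =>
    mem_cells_of_between sh hc hq (by simp) (by simp) (by simp) (by simp)
  simp only [OutsideCorner, InsideCorner, sub_zero, hq, true_and]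
  by_cases h1 : (i - 1, j) ∈ sh.cells <;> by_cases h2 : (i, j - 1) ∈ sh.cells <;>
    by_cases h3 : (i - 1, j - 1) ∈ sh.cells <;> simp_all

/-- If `(λ/μ)^♮` is obtained from `λ/μ` by a `180°` rotation, i.e.
its diagram is `{(h − i, k − j) : (i,j) ∈ λ/μ}`, then the two shapes have the same
rank. -/
theorem rank_rotate (sh sh' : SkewShape) (h k : ℤ)
    (hrot : ∀ p : ℤ × ℤ, p ∈ sh'.cells ↔ ∃ q ∈ sh.cells, p.1 = h - q.1 ∧ p.2 = k - q.2) :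
    sh'.rank = sh.rank := by
  have hS : ∀ p, p ∈ sh'.cells ↔ (h, k) - p ∈ sh.cells := by
    intro p
    rw [hrot]
    constructor
    · rintro ⟨q, hq, h1, h2⟩
      have : (h, k) - p = q := Prod.ext (by simp [h1]) (by simp [h2])
      rwa [this]
    · intro hp
      exact ⟨_, hp, by simp, by simp⟩
  have e := dplus_add_eq sh
  have e' := dplus_add_eq sh'
  simp only [shiftCount_rotate _ _ _ _ hS] at e'
  unfold SkewShape.rank
  omega

end

end SkewBorder
end

section
/- For every skew shape λ/μ, rank(λ/μ) ≤ zrank(λ/μ); equivalently, the polynomial s_{λ/μ}(1^t) in t is divisible by t^{rank(λ/μ)}. -/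
/-!
Write `lᵢ = λᵢ - i` and `mᵢ = μᵢ - i` for `i < n`, and `M = {m₀, …, mₙ₋₁}`. The Jacobi–Trudi entry
in position `(i, j)` is `hPoly (lᵢ - mⱼ)`, which is divisible by `X` unless `lᵢ = mⱼ`. Hence every
row `i` with `lᵢ ∉ M` is divisible by `X`, and the determinant is divisible by `X ^ r`, where `r` is
the number of such rows.

It remains to see that `d⁺ ≤ d⁻ + r`. The square of row `i` on the diagonal of content `c` lies in
`λ/μ` iff `mᵢ ≤ c < lᵢ`, so that diagonal has `N c = #{i < n : mᵢ ≤ c < lᵢ}` squares, and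
`N c - N (c - 1) = #{i : mᵢ = c} - #{i : lᵢ = c}`. Summing over `c ∈ M` gives
`∑_{c ∈ M} N c - ∑_{c ∈ M - 1} N c = n - #{i : lᵢ ∈ M} = r`. The outside diagonals have contents in
`M \ (M - 1)`, while every nonempty diagonal with content in `(M - 1) \ M` starts at an inside
corner. After cancelling `M ∩ (M - 1)` this gives the inequality.
-/

open Set Polynomial

namespace SkewBorder

noncomputable section

/-! ### Divisibility of the determinant -/

theorem X_dvd_hPoly {a : ℤ} (ha : a ≠ 0) : (Polynomial.X : Polynomial ℚ) ∣ hPoly a := by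
  unfold hPoly
  split_ifs with h
  · exact dvd_zero _
  · have h0 : (0 : ℕ) ∈ Finset.range a.toNat := by
      rw [Finset.mem_range]; omega
    have := Finset.dvd_prod_of_mem
      (fun s : ℕ => (Polynomial.X + Polynomial.C (s : ℚ) : Polynomial ℚ)) h0
    simp only [Nat.cast_zero, map_zero, add_zero] at this
    exact this.mul_left _

theorem pow_card_dvd_det {R : Type*} [CommRing R] {n : ℕ} (A : Matrix (Fin n) (Fin n) R) (x : R)
    (S : Finset (Fin n)) (hS : ∀ i ∈ S, ∀ j, x ∣ A i j) : x ^ S.card ∣ A.det := by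
  have h : ∀ i j, ∃ b, A i j = (if i ∈ S then x else 1) * b := by
    intro i j
    split_ifs with hi
    · exact hS i hi j
    · exact ⟨A i j, by simp⟩
  choose B hB using h
  have hA : A = Matrix.diagonal (fun i => if i ∈ S then x else 1) * Matrix.of B := by
    ext i j
    rw [Matrix.diagonal_mul, hB]
    rfl
  rw [hA, Matrix.det_mul, Matrix.det_diagonal, Finset.prod_ite_mem, Finset.univ_inter,
    Finset.prod_const]
  exact dvd_mul_right _ _

/-! ### Diagonals and shifted parts -/

namespace SkewShape

/-- The shifted parts `lᵢ = λᵢ - i` of the outer partition. -/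
def ell (sh : SkewShape) (i : ℕ) : ℤ := (sh.lam i : ℤ) - i

/-- The shifted parts `mᵢ = μᵢ - i` of the inner partition. -/
def em (sh : SkewShape) (i : ℕ) : ℤ := (sh.mu i : ℤ) - i

/-- The set `M` of the first `n` shifted parts of the inner partition. -/
def emSet (sh : SkewShape) (n : ℕ) : Finset ℤ := (Finset.range n).image sh.em

/-- The set `M - 1`. -/
def emSet' (sh : SkewShape) (n : ℕ) : Finset ℤ := (sh.emSet n).image (fun c => c - 1)

/-- The number of squares on the diagonal `j - i = c` in the first `n` rows, counted by row. -/
def diagLen (sh : SkewShape) (n : ℕ) (c : ℤ) : ℕ :=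
  ((Finset.range n).filter (fun i => sh.em i ≤ c ∧ c < sh.ell i)).card

/-- The squares in the first `n` rows whose content `j - i` lies in `S`. -/
def diagCells (sh : SkewShape) (n : ℕ) (S : Finset ℤ) : Finset (ℤ × ℤ) :=
  ((S ×ˢ Finset.range n).filter (fun q => sh.em q.2 ≤ q.1 ∧ q.1 < sh.ell q.2)).image
    (fun q => ((q.2 : ℤ), q.1 + q.2))

theorem card_diagCells (sh : SkewShape) (n : ℕ) (S : Finset ℤ) :
    (sh.diagCells n S).card = ∑ c ∈ S, sh.diagLen n c := by
  unfold diagCells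
  rw [Finset.card_image_of_injective]
  · simp only [diagLen, Finset.card_filter]
    rw [Finset.sum_product]
  · rintro ⟨c, i⟩ ⟨c', i'⟩ h
    simp only [Prod.mk.injEq] at h ⊢
    omega

theorem mem_cells_iff (sh : SkewShape) (i : ℕ) (j : ℤ) :
    ((i : ℤ), j) ∈ sh.cells ↔ (sh.mu i : ℤ) ≤ j ∧ j < sh.lam i := by
  simp [cells, skewCells]

theorem exists_row (sh : SkewShape) {n : ℕ} (hn : ∀ i, n ≤ i → sh.lam i = 0) {p : ℤ × ℤ}
    (hp : p ∈ sh.cells) : ∃ i : ℕ, i < n ∧ p.1 = i := by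
  obtain ⟨h1, h2, h3⟩ := hp
  refine ⟨p.1.toNat, ?_, by omega⟩
  by_contra! h
  have := hn _ h
  omega

theorem mem_diagCells (sh : SkewShape) {n : ℕ} (hn : ∀ i, n ≤ i → sh.lam i = 0) (S : Finset ℤ)
    (p : ℤ × ℤ) : p ∈ sh.diagCells n S ↔ p ∈ sh.cells ∧ p.2 - p.1 ∈ S := by
  obtain ⟨a, b⟩ := p
  simp only [diagCells, Finset.mem_image, Finset.mem_filter, Finset.mem_product, Finset.mem_range,
    Prod.exists, Prod.mk.injEq]
  simp only [em, ell]
  constructor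
  · rintro ⟨c, i, ⟨⟨hc, hi⟩, h1, h2⟩, rfl, rfl⟩
    refine ⟨(sh.mem_cells_iff _ _).2 ⟨by omega, by omega⟩, by simpa using hc⟩
  · rintro ⟨hp, hS⟩
    obtain ⟨i, hi, rfl⟩ := sh.exists_row hn hp
    obtain ⟨h1, h2⟩ := (sh.mem_cells_iff _ _).1 hp
    exact ⟨b - i, i, ⟨⟨hS, hi⟩, by omega, by omega⟩, rfl, by omega⟩

theorem cells_finite (sh : SkewShape) : sh.cells.Finite := by
  obtain ⟨n, hn⟩ := sh.lam_part.2
  apply ((Finset.Icc (0 : ℤ) n) ×ˢ (Finset.Icc (0 : ℤ) (sh.lam 0))).finite_toSet.subset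
  rintro ⟨a, b⟩ hp
  obtain ⟨i, hi, rfl⟩ := sh.exists_row hn hp
  obtain ⟨h1, h2⟩ := (sh.mem_cells_iff _ _).1 hp
  have := sh.lam_part.1 0 i (Nat.zero_le _)
  simp only [Finset.coe_product, Finset.coe_Icc, Set.mem_prod, Set.mem_Icc]
  omega

theorem mem_emSet (sh : SkewShape) (n : ℕ) (c : ℤ) :
    c ∈ sh.emSet n ↔ ∃ i < n, (sh.mu i : ℤ) - i = c := by
  simp [emSet, em]

theorem mem_emSet' (sh : SkewShape) (n : ℕ) (c : ℤ) :
    c ∈ sh.emSet' n ↔ ∃ i < n, (sh.mu i : ℤ) - i = c + 1 := by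
  simp only [emSet', Finset.mem_image, mem_emSet]
  constructor
  · rintro ⟨a, ⟨i, hi, h⟩, h'⟩
    exact ⟨i, hi, by omega⟩
  · rintro ⟨i, hi, h⟩
    exact ⟨c + 1, ⟨i, hi, h⟩, by omega⟩

/-! ### Corner diagonals in terms of contents -/

/-- Outside diagonals have contents in `M \ (M - 1)`. -/
theorem dplus_le (sh : SkewShape) {n : ℕ} (hn : ∀ i, n ≤ i → sh.lam i = 0) :
    sh.dplus ≤ ∑ c ∈ sh.emSet n \ sh.emSet' n, sh.diagLen n c := by
  rw [← card_diagCells, ← Set.ncard_coe_finset]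
  apply Set.ncard_le_ncard _ (Finset.finite_toSet _)
  rintro p ⟨hp, ⟨a, j⟩, ⟨hq, hup, hleft⟩, r, rfl⟩
  rw [Finset.mem_coe, mem_diagCells sh hn]
  refine ⟨hp, ?_⟩
  obtain ⟨i, hi, hai⟩ := sh.exists_row hn hq
  simp only at hai
  subst hai
  rw [mem_cells_iff] at hq hleft
  have hj : j = sh.mu i := by omega
  rw [Finset.mem_sdiff, mem_emSet, mem_emSet']
  refine ⟨⟨i, hi, by simp only; omega⟩, ?_⟩
  rintro ⟨k, hk, hkc⟩
  simp only at hkc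
  -- Since `m` is strictly decreasing, `mₖ = mᵢ + 1` forces `k = i - 1` and `μₖ = μᵢ`.
  have hki : k < i := by
    by_contra! h
    have := sh.mu_part.1 i k h
    omega
  have hmu := sh.mu_part.1 k i hki.le
  have hk1 : i = k + 1 := by omega
  have hlam := sh.lam_part.1 k i hki.le
  apply hup
  have hrow : ((i : ℤ) - 1) = (k : ℤ) := by omega
  simp only [hrow]
  rw [mem_cells_iff]
  omega

/-- A nonempty diagonal with content in `(M - 1) \ M` starts at an inside corner. -/
theorem le_dminus (sh : SkewShape) {n : ℕ} (hn : ∀ i, n ≤ i → sh.lam i = 0) :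
    ∑ c ∈ sh.emSet' n \ sh.emSet n, sh.diagLen n c ≤ sh.dminus := by
  rw [← card_diagCells, ← Set.ncard_coe_finset]
  apply Set.ncard_le_ncard _ (sh.cells_finite.subset fun p hp => hp.1)
  rintro ⟨a, b⟩ hp
  rw [Finset.mem_coe, mem_diagCells sh hn] at hp
  obtain ⟨hp, hS⟩ := hp
  refine ⟨hp, ?_⟩
  obtain ⟨r, hr, har⟩ := sh.exists_row hn hp
  simp only at har
  subst har
  rw [Finset.mem_sdiff, mem_emSet, mem_emSet'] at hS
  obtain ⟨⟨i, hi, hic⟩, hnot⟩ := hS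
  simp only at hic hnot
  rw [mem_cells_iff] at hp
  have hir : i + 1 ≤ r := by
    by_contra! h
    have := sh.mu_part.1 r i (by omega)
    omega
  have hne : (sh.mu (i + 1) : ℤ) - ((i + 1 : ℕ) : ℤ) ≠ b - r :=
    fun h => hnot ⟨i + 1, by omega, h⟩
  have h1 := sh.mu_part.1 i (i + 1) (by omega)
  have h2 := sh.lam_part.1 (i + 1) r hir
  have h3 := sh.lam_part.1 i (i + 1) (by omega)
  push_cast at hne
  have hrow : (((i + 1 : ℕ) : ℤ) - 1) = (i : ℤ) := by omega
  refine ⟨(((i + 1 : ℕ) : ℤ), (sh.mu i : ℤ)), ⟨?_, ?_, ?_, ?_⟩, r - (i + 1), ?_⟩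
  · rw [mem_cells_iff]; omega
  · simp only [hrow]; rw [mem_cells_iff]; omega
  · simp only; rw [mem_cells_iff]; omega
  · simp only [hrow]; rw [mem_cells_iff]; omega
  · simp only [Prod.mk.injEq]; omega

/-! ### Summation by parts -/

/-- The first difference of the diagonal length counts shifted parts equal to `c`. -/
theorem diagLen_sub (sh : SkewShape) (n : ℕ) (c : ℤ) :
    (sh.diagLen n c : ℤ) - sh.diagLen n (c - 1) =
      ∑ i ∈ Finset.range n, ((if sh.em i = c then 1 else 0) - (if sh.ell i = c then 1 else 0)) := by
  simp only [diagLen, Finset.card_filter, Nat.cast_sum, ← Finset.sum_sub_distrib]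
  refine Finset.sum_congr rfl fun i _ => ?_
  have : sh.em i ≤ sh.ell i := by
    have := sh.mu_le i
    unfold em ell
    omega
  split_ifs <;> push_cast <;> omega

theorem sum_diagLen_sub (sh : SkewShape) (n : ℕ) :
    ∑ c ∈ sh.emSet n, (sh.diagLen n c : ℤ) - ∑ c ∈ sh.emSet' n, (sh.diagLen n c : ℤ) =
      ((Finset.range n).filter (fun i => sh.ell i ∉ sh.emSet n)).card := by
  unfold emSet'
  rw [Finset.sum_image (fun a _ b _ h => by simpa using h), ← Finset.sum_sub_distrib]
  simp only [diagLen_sub]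
  rw [Finset.sum_comm, Finset.card_filter, Nat.cast_sum]
  refine Finset.sum_congr rfl fun i hi => ?_
  have hmem : sh.em i ∈ sh.emSet n := Finset.mem_image_of_mem _ hi
  rw [Finset.sum_sub_distrib, Finset.sum_ite_eq, Finset.sum_ite_eq, if_pos hmem]
  split_ifs <;> simp_all

theorem rank_le (sh : SkewShape) {n : ℕ} (hn : ∀ i, n ≤ i → sh.lam i = 0) :
    sh.rank ≤ ((Finset.range n).filter (fun i => sh.ell i ∉ sh.emSet n)).card := by
  have h1 := sh.dplus_le hn
  have h2 := sh.le_dminus hn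
  have h3 := sh.sum_diagLen_sub n
  rw [← Finset.sum_sdiff_sub_sum_sdiff] at h3
  unfold rank
  zify at h1 h2
  omega

end SkewShape

/-- `rank(λ/μ) ≤ zrank(λ/μ)`: the polynomial `s_{λ/μ}(1^t)` in `t`
is divisible by `t ^ rank(λ/μ)`. -/
theorem X_pow_rank_dvd_jtPoly (sh : SkewShape) (n : ℕ) (hn : ∀ i, n ≤ i → sh.lam i = 0) :
    Polynomial.X ^ sh.rank ∣ jtPoly sh n := by
  refine (pow_dvd_pow _ (sh.rank_le hn)).trans ?_
  have hcard : ((Finset.range n).filter (fun i => sh.ell i ∉ sh.emSet n)).card =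
      (Finset.univ.filter (fun i : Fin n => sh.ell i ∉ sh.emSet n)).card := by
    rw [Finset.card_filter, Finset.card_filter, Finset.sum_range]
  rw [hcard]
  apply pow_card_dvd_det
  intro i hi j
  rw [Finset.mem_filter, SkewShape.mem_emSet] at hi
  refine X_dvd_hPoly fun h => hi.2 ⟨j, j.2, ?_⟩
  unfold SkewShape.ell
  omega

end

end SkewBorder
end

section
/- If every row of the Jacobi–Trudi matrix JT_{λ/μ} that contains an entry equal to 0 also contains an entry equal to 1 (i.e., every row i with λ_i−μ_j−i+j < 0 for some j also has λ_i−μ_j−i+j = 0 for some j), then zrank(λ/μ) = rank(λ/μ); equivalently, the coefficient of t^{rank(λ/μ)} in the polynomial s_{λ/μ}(1^t) is nonzero. -/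
/-!
Put `α_i = λ_i − i` and `β_j = μ_j − j`, so that the Jacobi–Trudi matrix has entries
`h_{α_i − β_j}`, and let `r` be the number of rows without an entry `1`, that is, with `α_i`
different from all `β_j`.

`rank_eq` shows `rank(λ/μ) = r`. The topmost square of the diagonal of content `k` is an outside
corner iff `k` is some `β_m` and `k + 1` is not, and an inside corner iff `k + 1` is some `β_m` and
`k` is not (`outside_iff`, `inside_iff`). Hence `d⁺ − d⁻` is the sum, over all squares, of a
difference of consecutive values of the indicator function of `{β_m}`, and this telescopes along
each row of the diagram.

By hypothesis a row without an entry `1` has no zero entry either, so all its entries are `h_a` with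
`a > 0`, and `h_a(1^t) / t` is `1 / a` at `t = 0` (`hPoly_pos`). Dividing these `r` rows by `t` and
setting `t = 0` gives the coefficient of `t ^ r` as the determinant of a matrix whose row `i` is
`1 / (α_i − β_j)` if row `i` had no entry `1`, and the unit vector marking the column with
`β_j = α_i` otherwise. This degenerate Cauchy matrix is invertible (`cauchy_det_ne_zero`).
-/

open Set Polynomial

namespace SkewBorder

noncomputable section

/-! ### The rank counts the rows of the Jacobi–Trudi matrix without an entry `1` -/

/-- `k` is one of the numbers `μ_m − m`. The `(i, j)` entry of the Jacobi–Trudi matrix is `h_a`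
with `a = (λ_i − i) − (μ_j − j)`, so row `i` contains an entry `1` iff `λ_i − i` is of this form. -/
def MuShift (sh : SkewShape) (k : ℤ) : Prop := ∃ m : ℕ, (sh.mu m : ℤ) - m = k

/-- The diagonal of content `k` starts in an outside corner iff `k` is some `μ_m − m` and `k + 1`
is not: the corner is then `(m, μ_m)`. -/
lemma outside_iff_s6 (sh : SkewShape) (i j : ℕ) (h1 : sh.mu i ≤ j) (h2 : j < sh.lam i) :
    (∃ q : ℤ × ℤ, OutsideCorner sh q ∧ ∃ n : ℕ, ((i : ℤ), (j : ℤ)) = (q.1 + n, q.2 + n)) ↔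
      MuShift sh ((j : ℤ) - i) ∧ ¬ MuShift sh ((j : ℤ) - i + 1) := by
  have hmu := sh.mu_part.1
  have hlam := sh.lam_part.1
  constructor
  · rintro ⟨⟨a, b⟩, ⟨hc, hu, hl⟩, n, hn⟩
    simp only [Prod.mk.injEq] at hn
    simp only [SkewShape.cells, skewCells, Set.mem_ofPred_eq] at hc hu hl
    obtain ⟨ha, hb1, hb2⟩ := hc
    lift a to ℕ using ha
    simp only [Int.toNat_natCast] at hb1 hb2 hl
    refine ⟨⟨a, by omega⟩, ?_⟩
    rintro ⟨m, hm⟩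
    rcases le_or_gt a m with h | h
    · have := hmu a m h
      omega
    · obtain ⟨c, rfl⟩ : ∃ c, a = c + 1 := ⟨a - 1, by omega⟩
      have e : (((c + 1 : ℕ) : ℤ) - 1).toNat = c := by omega
      rw [e] at hu
      have := hmu m c (by omega)
      have := hlam c (c + 1) (by omega)
      omega
  · rintro ⟨⟨m, hm⟩, hk⟩
    have hmi : m ≤ i := by
      by_contra! h
      have := hmu i m h.le
      omega
    have := hlam m i hmi
    refine ⟨((m : ℤ), (sh.mu m : ℤ)), ⟨?_, ?_, ?_⟩, i - m, ?_⟩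
    · simp only [SkewShape.cells, skewCells, Set.mem_ofPred_eq, Int.toNat_natCast]
      omega
    · simp only [SkewShape.cells, skewCells, Set.mem_ofPred_eq]
      rintro ⟨h0, h3, -⟩
      obtain ⟨c, rfl⟩ : ∃ c, m = c + 1 := ⟨m - 1, by omega⟩
      have e : (((c + 1 : ℕ) : ℤ) - 1).toNat = c := by omega
      rw [e] at h3
      have := hmu c (c + 1) (by omega)
      exact hk ⟨c, by omega⟩
    · simp only [SkewShape.cells, skewCells, Set.mem_ofPred_eq, Int.toNat_natCast]
      omega
    · simp only [Prod.mk.injEq]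
      omega

/-- The diagonal of content `k` starts in an inside corner iff `k + 1` is some `μ_m − m` and `k`
is not: the corner is then `(m + 1, μ_m)`. -/
lemma inside_iff_s6 (sh : SkewShape) (i j : ℕ) (h1 : sh.mu i ≤ j) (h2 : j < sh.lam i) :
    (∃ q : ℤ × ℤ, InsideCorner sh q ∧ ∃ n : ℕ, ((i : ℤ), (j : ℤ)) = (q.1 + n, q.2 + n)) ↔
      MuShift sh ((j : ℤ) - i + 1) ∧ ¬ MuShift sh ((j : ℤ) - i) := by
  have hmu := sh.mu_part.1
  have hlam := sh.lam_part.1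
  constructor
  · rintro ⟨⟨a, b⟩, ⟨hc, hu, hl, hd⟩, n, hn⟩
    simp only [Prod.mk.injEq] at hn
    simp only [SkewShape.cells, skewCells, Set.mem_ofPred_eq] at hc hu hl hd
    obtain ⟨ha, hb1, hb2⟩ := hc
    lift a to ℕ using ha
    obtain ⟨c, rfl⟩ : ∃ c, a = c + 1 := ⟨a - 1, by omega⟩
    have e : (((c + 1 : ℕ) : ℤ) - 1).toNat = c := by omega
    rw [e] at hu hd
    simp only [Int.toNat_natCast] at hb1 hb2 hl
    refine ⟨⟨c, by omega⟩, ?_⟩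
    rintro ⟨m, hm⟩
    rcases le_or_gt (c + 1) m with h | h
    · have := hmu (c + 1) m h
      omega
    · have := hmu m c (by omega)
      omega
  · rintro ⟨⟨m, hm⟩, hk⟩
    have hmi : m + 1 ≤ i := by
      by_contra! h
      have := hmu i m (by omega)
      omega
    have := hlam (m + 1) i hmi
    have := hlam m (m + 1) (by omega)
    have := hmu m (m + 1) (by omega)
    have hne : sh.mu (m + 1) ≠ sh.mu m := fun h => hk ⟨m + 1, by push_cast; omega⟩
    have e : (((m + 1 : ℕ) : ℤ) - 1).toNat = m := by omega
    refine ⟨(((m + 1 : ℕ) : ℤ), (sh.mu m : ℤ)), ⟨?_, ?_, ?_, ?_⟩, i - (m + 1), ?_⟩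
    · simp only [SkewShape.cells, skewCells, Set.mem_ofPred_eq, Int.toNat_natCast]
      omega
    · simp only [SkewShape.cells, skewCells, Set.mem_ofPred_eq, e]
      omega
    · simp only [SkewShape.cells, skewCells, Set.mem_ofPred_eq, Int.toNat_natCast]
      omega
    · simp only [SkewShape.cells, skewCells, Set.mem_ofPred_eq, e]
      omega
    · simp only [Prod.mk.injEq]
      omega

/-- Counts, row by row, the squares of `λ/μ` satisfying `Q`, once membership in the
corresponding set of squares is described by `Q`. -/
lemma ncard_cells (sh : SkewShape) (n : ℕ) (hn : ∀ i, n ≤ i → sh.lam i = 0)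
    (P : ℤ × ℤ → Prop) (Q : ℕ → ℕ → Prop) [∀ i j, Decidable (Q i j)]
    (hPQ : ∀ i j : ℕ, sh.mu i ≤ j → j < sh.lam i → (P (i, j) ↔ Q i j)) :
    {p : ℤ × ℤ | p ∈ sh.cells ∧ P p}.ncard =
      ∑ i ∈ Finset.range n, ∑ j ∈ Finset.Ico (sh.mu i) (sh.lam i), if Q i j then 1 else 0 := by
  have hinj : Function.Injective (fun x : Σ _ : ℕ, ℕ => ((x.1 : ℤ), (x.2 : ℤ))) := by
    rintro ⟨a, b⟩ ⟨c, d⟩ h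
    simp only [Prod.mk.injEq, Nat.cast_inj] at h
    obtain ⟨rfl, rfl⟩ := h
    rfl
  have hset : {p : ℤ × ℤ | p ∈ sh.cells ∧ P p} =
      (fun x : Σ _ : ℕ, ℕ => ((x.1 : ℤ), (x.2 : ℤ))) ''
        (((Finset.range n).sigma fun i =>
          (Finset.Ico (sh.mu i) (sh.lam i)).filter (Q i) : Finset (Σ _ : ℕ, ℕ)) :
            Set (Σ _ : ℕ, ℕ)) := by
    ext ⟨a, b⟩
    simp only [SkewShape.cells, skewCells, Set.mem_ofPred_eq, Set.mem_image, Finset.mem_coe,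
      Finset.mem_sigma, Finset.mem_range, Finset.mem_filter, Finset.mem_Ico, Prod.mk.injEq]
    constructor
    · rintro ⟨⟨ha, hb1, hb2⟩, hP⟩
      lift a to ℕ using ha
      rw [Int.toNat_natCast] at hb1 hb2
      lift b to ℕ using by omega
      refine ⟨⟨a, b⟩, ⟨?_, ⟨Nat.cast_le.1 hb1, Nat.cast_lt.1 hb2⟩, ?_⟩, rfl, rfl⟩
      · by_contra! h
        have := hn a h
        omega
      · exact (hPQ a b (by omega) (by omega)).1 hP
    · rintro ⟨⟨c, d⟩, ⟨-, ⟨h1, h2⟩, hQ⟩, rfl, rfl⟩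
      simp only [Int.toNat_natCast]
      exact ⟨⟨Int.natCast_nonneg c, Nat.cast_le.2 h1, Nat.cast_lt.2 h2⟩, (hPQ c d h1 h2).2 hQ⟩
  rw [hset, Set.ncard_image_of_injective _ hinj, Set.ncard_coe_finset, Finset.card_sigma]
  simp only [Finset.card_filter]

open Classical in
/-- The rank is the number of rows of the Jacobi–Trudi matrix without an entry `1`. Writing `b` for
the indicator of `MuShift`, a square of content `k` contributes `b k − b (k + 1)` to `d⁺ − d⁻`, so
row `i` of the diagram contributes a telescoping sum, with value `1 − b (λ_i − i)`. -/
lemma rank_eq_s6 (sh : SkewShape) (n : ℕ) (hn : ∀ i, n ≤ i → sh.lam i = 0) :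
    sh.rank = ((Finset.range n).filter fun i => ¬ MuShift sh ((sh.lam i : ℤ) - i)).card := by
  have hp : sh.dplus = _ := ncard_cells sh n hn _
    (fun i j => MuShift sh ((j : ℤ) - i) ∧ ¬ MuShift sh ((j : ℤ) - i + 1)) (outside_iff_s6 sh)
  have hm : sh.dminus = _ := ncard_cells sh n hn _
    (fun i j => MuShift sh ((j : ℤ) - i + 1) ∧ ¬ MuShift sh ((j : ℤ) - i)) (inside_iff_s6 sh)
  have key : (sh.dplus : ℤ) - sh.dminus =
      (((Finset.range n).filter fun i => ¬ MuShift sh ((sh.lam i : ℤ) - i)).card : ℤ) := by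
    rw [hp, hm, Finset.card_filter]
    push_cast
    rw [← Finset.sum_sub_distrib]
    refine Finset.sum_congr rfl fun i _ => ?_
    rw [← Finset.sum_sub_distrib]
    let b : ℤ → ℤ := fun k => if MuShift sh k then 1 else 0
    have hb : ∀ j : ℕ, ((if MuShift sh ((j : ℤ) - i) ∧ ¬ MuShift sh ((j : ℤ) - i + 1)
          then (1 : ℤ) else 0) -
        if MuShift sh ((j : ℤ) - i + 1) ∧ ¬ MuShift sh ((j : ℤ) - i) then (1 : ℤ) else 0) =
        -(b (((j + 1 : ℕ) : ℤ) - i) - b ((j : ℤ) - i)) := by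
      intro j
      have e : ((j + 1 : ℕ) : ℤ) - i = (j : ℤ) - i + 1 := by push_cast; ring
      simp only [b, e]
      by_cases h1 : MuShift sh ((j : ℤ) - i) <;>
        by_cases h2 : MuShift sh ((j : ℤ) - i + 1) <;> simp [h1, h2]
    rw [Finset.sum_congr rfl fun j _ => hb j, Finset.sum_neg_distrib,
      Finset.sum_Ico_sub (fun j : ℕ => b ((j : ℤ) - i)) (sh.mu_le i)]
    have h0 : MuShift sh ((sh.mu i : ℤ) - i) := ⟨i, rfl⟩
    by_cases h : MuShift sh ((sh.lam i : ℤ) - i) <;> simp [b, h0, h]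
  rw [SkewShape.rank]
  omega

/-! ### A degenerate Cauchy determinant -/

/-- A Cauchy matrix `1 / (α_i − β_j)` in which the rows with `α_i = β_j` for some `j` are replaced
by the corresponding unit vectors is invertible. For `v` in its kernel, the polynomial
`∑ j, v_j ∏_{j' ≠ j} (X − β_{j'})` of degree less than `n` vanishes at all `n` points `α_i`. -/
lemma cauchy_det_ne_zero {n : ℕ} (α β : Fin n → ℚ) (hα : Function.Injective α)
    (hβ : Function.Injective β) (A : Matrix (Fin n) (Fin n) ℚ)
    (h1 : ∀ i, (∀ j, α i ≠ β j) → ∀ j, A i j = (α i - β j)⁻¹)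
    (h2 : ∀ i, (∃ j, α i = β j) → ∀ j, A i j = if α i = β j then 1 else 0) :
    A.det ≠ 0 := by
  classical
  intro hdet
  obtain ⟨v, hv, hAv⟩ := Matrix.exists_mulVec_eq_zero_iff.2 hdet
  let P : ℚ[X] := ∑ j, C (v j) * ∏ k ∈ Finset.univ.erase j, (X - C (β k))
  have hPβ : ∀ j, P.eval (β j) = v j * ∏ k ∈ Finset.univ.erase j, (β j - β k) := by
    intro j
    simp only [P, eval_finsetSum, eval_mul, eval_C, eval_prod, eval_sub, eval_X]
    refine Finset.sum_eq_single j (fun k _ hk => ?_) (by simp)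
    rw [Finset.prod_eq_zero (i := j) (by simp [hk.symm]) (by simp), mul_zero]
  have hdeg : P.degree < (Finset.univ : Finset (Fin n)).card := by
    refine (Polynomial.degree_sum_le _ _).trans_lt ?_
    rw [Finset.sup_lt_iff (by simp [bot_lt_iff_ne_bot])]
    intro j hj
    have h := Finset.card_erase_lt_of_mem hj
    refine lt_of_le_of_lt ?_ (Nat.cast_lt.2 h)
    refine (degree_mul_le _ _).trans ?_
    refine (add_le_add degree_C_le le_rfl).trans ?_
    rw [zero_add, degree_prod]
    simp
  have hP0 : P = 0 := by
    refine Polynomial.eq_zero_of_degree_lt_of_eval_index_eq_zero (v := α) Finset.univ hα.injOn hdeg ?_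
    intro i _
    have hi : ∑ j, A i j * v j = 0 := congrFun hAv i
    by_cases h : ∃ j, α i = β j
    · simp only [h2 i h] at hi
      obtain ⟨j, hj⟩ := h
      rw [hj, hPβ]
      simp only [hj, hβ.eq_iff, ite_mul, one_mul, zero_mul, Finset.sum_ite_eq,
        Finset.mem_univ, if_true] at hi
      rw [hi, zero_mul]
    · push Not at h
      simp only [h1 i h] at hi
      simp only [P, eval_finsetSum, eval_mul, eval_C, eval_prod, eval_sub, eval_X]
      rw [← mul_zero (∏ k, (α i - β k)), ← hi, Finset.mul_sum]
      refine Finset.sum_congr rfl fun j _ => ?_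
      rw [← Finset.mul_prod_erase _ _ (Finset.mem_univ j)]
      have := sub_ne_zero.2 (h j)
      field_simp
  refine hv (funext fun j => ?_)
  have := hPβ j
  rw [hP0, eval_zero, eq_comm, mul_eq_zero] at this
  refine this.resolve_right (Finset.prod_ne_zero_iff.2 fun k hk => ?_)
  exact sub_ne_zero.2 (hβ.ne (Finset.ne_of_mem_erase hk).symm)

/-! ### The lowest term of the specialized Jacobi–Trudi determinant -/

/-- `h_a(1^t) / t` takes the value `(a − 1)! / a! = 1 / a` at `t = 0`. -/
lemma hPoly_pos {a : ℤ} (ha : 0 < a) :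
    ∃ g : ℚ[X], hPoly a = X * g ∧ g.eval 0 = (a : ℚ)⁻¹ := by
  obtain ⟨m, rfl⟩ : ∃ m : ℕ, a = ((m + 1 : ℕ) : ℤ) := ⟨(a - 1).toNat, by omega⟩
  refine ⟨C (((m + 1).factorial : ℚ))⁻¹ * ∏ s ∈ Finset.range m, (X + C ((s + 1 : ℕ) : ℚ)), ?_, ?_⟩
  · rw [hPoly, if_neg (by omega), Int.toNat_natCast, Finset.prod_range_succ']
    simp only [Nat.cast_zero, map_zero, add_zero]
    ring
  · simp only [eval_mul, eval_C, eval_prod, eval_add, eval_X, zero_add]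
    rw [← Nat.cast_prod, Finset.prod_range_add_one_eq_factorial, Nat.factorial_succ]
    have : (m.factorial : ℚ) ≠ 0 := by exact_mod_cast m.factorial_ne_zero
    push_cast
    field_simp

lemma hPoly_eval_zero (a : ℤ) : (hPoly a).eval 0 = if a = 0 then 1 else 0 := by
  rcases lt_trichotomy a 0 with h | rfl | h
  · simp [hPoly, h, h.ne]
  · simp [hPoly]
  · obtain ⟨g, hg, -⟩ := hPoly_pos h
    simp [hg, h.ne.symm]

/-- If every row of the Jacobi–Trudi matrix `JT_{λ/μ}` containing an
entry equal to `0` (i.e. with `λ_i − μ_j − i + j < 0` for some `j`) also contains an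
entry equal to `1` (i.e. with `λ_i − μ_j − i + j = 0` for some `j`), then
`zrank(λ/μ) = rank(λ/μ)`; equivalently, the coefficient of `t ^ rank(λ/μ)` in
`s_{λ/μ}(1^t)` is nonzero. -/
theorem zrank_eq_rank_of_rows (sh : SkewShape) (n : ℕ) (hn : ∀ i, n ≤ i → sh.lam i = 0)
    (hrows : ∀ i : Fin n,
      (∃ j : Fin n, (sh.lam i : ℤ) - (sh.mu j : ℤ) - ((i : ℕ) : ℤ) + ((j : ℕ) : ℤ) < 0) →
      ∃ j : Fin n, (sh.lam i : ℤ) - (sh.mu j : ℤ) - ((i : ℕ) : ℤ) + ((j : ℕ) : ℤ) = 0) :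
    (jtPoly sh n).rootMultiplicity 0 = sh.rank ∧ (jtPoly sh n).coeff sh.rank ≠ 0 := by
  classical
  let α : ℕ → ℤ := fun i => (sh.lam i : ℤ) - i
  let β : ℕ → ℤ := fun i => (sh.mu i : ℤ) - i
  have hαi : Function.Injective α := by
    have : StrictAnti α := fun i j h => by
      have := sh.lam_part.1 i j h.le
      simp only [α]
      omega
    exact this.injective
  have hβi : Function.Injective β := by
    have : StrictAnti β := fun i j h => by
      have := sh.mu_part.1 i j h.le
      simp only [β]
      omega
    exact this.injective
  have hentry : ∀ i j : Fin n,
      (sh.lam i : ℤ) - (sh.mu j : ℤ) - ((i : ℕ) : ℤ) + ((j : ℕ) : ℤ) = α i - β j := by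
    intro i j
    simp only [α, β]
    ring
  simp only [hentry] at hrows
  -- For `m ≥ n` one has `μ_m − m = −m ≤ −n < λ_i − i`, so only the `n` columns matter.
  have hshift : ∀ i : Fin n, MuShift sh (α i) ↔ ∃ j : Fin n, α i = β j := by
    intro i
    constructor
    · rintro ⟨m, hm⟩
      have hmn : m < n := by
        by_contra! h
        have := hn m h
        have := sh.mu_le m
        have := i.2
        simp only [α] at hm
        omega
      exact ⟨⟨m, hmn⟩, hm.symm⟩
    · rintro ⟨j, hj⟩
      exact ⟨j, hj.symm⟩
  have hpos : ∀ i : Fin n, ¬ MuShift sh (α i) → ∀ j : Fin n, 0 < α i - β j := by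
    intro i hi j
    rw [hshift] at hi
    by_contra! h
    rcases h.lt_or_eq with h | h
    · obtain ⟨k, hk⟩ := hrows i ⟨j, h⟩
      exact hi ⟨k, by omega⟩
    · exact hi ⟨j, by omega⟩
  let d : Fin n → ℚ[X] := fun i => if MuShift sh (α i) then 1 else X
  have hN : ∀ i j : Fin n, ∃ g : ℚ[X], hPoly (α i - β j) = d i * g ∧
      g.eval 0 = if MuShift sh (α i) then (if α i = β j then 1 else 0)
        else ((α i - β j : ℤ) : ℚ)⁻¹ := by
    intro i j
    by_cases h : MuShift sh (α i)
    · refine ⟨hPoly (α i - β j), by simp [d, h], ?_⟩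
      simp [h, hPoly_eval_zero, sub_eq_zero]
    · obtain ⟨g, hg, hg0⟩ := hPoly_pos (hpos i h j)
      exact ⟨g, by simp [d, h, hg], by simp only [h, if_false, hg0]⟩
  choose N hN1 hN2 using hN
  have hdet : jtPoly sh n = X ^ sh.rank * (Matrix.of N).det := by
    have h1 : jtPoly sh n = (∏ i, d i) * (Matrix.of N).det := by
      rw [← Matrix.det_mul_column, jtPoly]
      congr 1
      ext1 i j
      simp only [Matrix.of_apply, hentry, hN1]
    rw [h1, rank_eq_s6 sh n hn]
    congr 1
    rw [Fin.prod_univ_eq_prod_range (fun i => if MuShift sh (α i) then (1 : ℚ[X]) else X) n,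
      Finset.prod_ite]
    simp [α]
  have hD : (Matrix.of N).det.eval 0 ≠ 0 := by
    have he : (Matrix.of N).det.eval 0 = ((Matrix.of N).map (Polynomial.eval 0)).det :=
      RingHom.map_det (Polynomial.evalRingHom (0 : ℚ)) (Matrix.of N)
    rw [he]
    refine cauchy_det_ne_zero (fun i => (α i : ℚ)) (fun i => (β i : ℚ)) ?_ ?_ _ ?_ ?_
    · intro i j h
      exact Fin.ext (hαi (Int.cast_injective h))
    · intro i j h
      exact Fin.ext (hβi (Int.cast_injective h))
    · intro i hi j
      have : ¬ MuShift sh (α i) := by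
        rw [hshift]
        rintro ⟨k, hk⟩
        exact hi k (by exact_mod_cast hk)
      simp [hN2, this]
    · rintro i ⟨k, hk⟩ j
      have : MuShift sh (α i) := (hshift i).2 ⟨k, by exact_mod_cast hk⟩
      simp [hN2, this]
  have hD0 : (Matrix.of N).det ≠ 0 := fun h => hD (by rw [h, eval_zero])
  rw [hdet]
  constructor
  · rw [rootMultiplicity_mul (mul_ne_zero (pow_ne_zero _ X_ne_zero) hD0),
      rootMultiplicity_eq_zero hD, add_zero]
    simpa using rootMultiplicity_X_sub_C_pow (0 : ℚ) sh.rank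
  · rw [coeff_X_pow_mul', if_pos le_rfl, Nat.sub_self, coeff_zero_eq_eval_zero]
    exact hD

end

end SkewBorder
end
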